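/- Fix an even integer r ≥ 4. There is a constant C = C(r) such that if G is drawn uniformly at random from the set of all simple r-regular graphs on vertex set {1,…,n} (with rn even), then with probability tending to 1 as n → ∞, for every rule A the E-process on G has vertex cover time at most C·n. -/

import Mathlib

open scoped ENNReal Classical

-- The edges traversed by a history `h = [Xₜ, Xₜ₋₁, …, X₀]` (most recent vertex first).
def trav {V : Type*} (h : List V) : List (Sym2 V) :=
  (h.zip h.tail).map fun p => s(p.1, p.2)

-- One-step transition probabilities of the E-process with edge-selection rule `A`.
noncomputable def eStep {V : Type*} [Fintype V] (G : SimpleGraph V) (A : List V → V) :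
    List V → V → ℝ
  | [], _ => 0
  | (v :: h), x =>
      if ∃ y : V, G.Adj v y ∧ s(v, y) ∉ trav (v :: h) then
        (if x = A (v :: h) then 1 else 0)
      else if G.Adj v x then 1 / ((G.neighborSet v).ncard : ℝ) else 0

-- A rule is valid if, whenever the current vertex has an untraversed incident edge, it
-- selects a neighbour along such an untraversed edge.
def ValidRule {V : Type*} (G : SimpleGraph V) (A : List V → V) : Prop :=
  ∀ (v : V) (h : List V), (∃ y : V, G.Adj v y ∧ s(v, y) ∉ trav (v :: h)) →
    G.Adj v (A (v :: h)) ∧ s(v, A (v :: h)) ∉ trav (v :: h)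

-- Probability that the E-process started at `u` produces the history `h`.
noncomputable def trajProb {V : Type*} [Fintype V] (G : SimpleGraph V) (A : List V → V)
    (u : V) : List V → ℝ
  | [] => 0
  | [x] => if x = u then 1 else 0
  | (x :: y :: h) => eStep G A (y :: h) x * trajProb G A u (y :: h)

-- Probability that the E-process started at `u` has not covered `V` by time `t`.
noncomputable def uncovProb {V : Type*} [Fintype V] (G : SimpleGraph V) (A : List V → V)
    (u : V) (t : ℕ) : ℝ :=
  ∑ f : Fin (t + 1) → V,
    if ∀ x : V, ∃ i, f i = x then 0 else trajProb G A u (List.ofFn f)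

-- Expected vertex cover time of the E-process started at `u`.
noncomputable def ecoverTime {V : Type*} [Fintype V] (G : SimpleGraph V) (A : List V → V)
    (u : V) : ℝ≥0∞ :=
  ∑' t : ℕ, ENNReal.ofReal (uncovProb G A u t)

noncomputable def aI {V : Type*} (G : SimpleGraph V) (x y : V) : ℝ := if G.Adj x y then 1 else 0

lemma aI_nonneg {V : Type*} (G : SimpleGraph V) (x y : V) : 0 ≤ aI G x y := by
  unfold aI; split_ifs <;> norm_num

lemma aI_comm {V : Type*} (G : SimpleGraph V) (x y : V) : aI G x y = aI G y x := by
  unfold aI; simp [G.adj_comm]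

def Expands {V : Type*} [Fintype V] (G : SimpleGraph V) (h : ℝ) : Prop :=
  ∀ U : Finset V, 2 * U.card ≤ Fintype.card V →
    h * U.card ≤ ∑ x ∈ U, ∑ y ∈ Uᶜ, aI G x y

lemma sum_aI_ind {V : Type*} [Fintype V] (G : SimpleGraph V) (U : Finset V) :
    ∑ x, ∑ y, aI G x y * |(if x ∈ U then (1:ℝ) else 0) - (if y ∈ U then 1 else 0)|
      = 2 * ∑ x ∈ U, ∑ y ∈ Uᶜ, aI G x y := by
  have h1 : ∀ x y : V, aI G x y * |(if x ∈ U then (1:ℝ) else 0) - (if y ∈ U then 1 else 0)|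
      = (if x ∈ U then (if y ∈ Uᶜ then aI G x y else 0) else 0)
        + (if y ∈ U then (if x ∈ Uᶜ then aI G y x else 0) else 0) := by
    intro x y
    by_cases hx : x ∈ U <;> by_cases hy : y ∈ U <;> simp [hx, hy, aI_comm G y x]
  simp_rw [h1, Finset.sum_add_distrib]
  have h2 : ∑ x, ∑ y, (if x ∈ U then (if y ∈ Uᶜ then aI G x y else 0) else 0)
      = ∑ x ∈ U, ∑ y ∈ Uᶜ, aI G x y := by
    rw [← Finset.sum_filter_add_sum_filter_not Finset.univ (· ∈ U)]
    rw [Finset.sum_congr rfl (g := fun x => ∑ y ∈ Uᶜ, aI G x y)]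
    · rw [Finset.sum_eq_zero (s := Finset.univ.filter (¬ · ∈ U))]
      · simp
      · intro x hx; simp at hx; simp [hx]
    · intro x hx; simp at hx; simp only [hx, if_true]
      rw [← Finset.sum_filter]; congr 1; ext; simp
  rw [Finset.sum_comm (f := fun x y => (if y ∈ U then (if x ∈ Uᶜ then aI G y x else 0) else 0)), h2]
  ring

lemma coarea {V : Type*} [Fintype V] (G : SimpleGraph V) (h : ℝ) (hE : Expands G h) :
    ∀ k : ℕ, ∀ q : V → ℝ, (∀ x, 0 ≤ q x) → (Finset.univ.filter (fun x => 0 < q x)).card = k →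
      2 * k ≤ Fintype.card V → 2 * h * ∑ x, q x ≤ ∑ x, ∑ y, aI G x y * |q x - q y| := by
  intro k
  induction k using Nat.strong_induction_on with
  | _ k ih =>
  intro q hq hk hk2
  set U := Finset.univ.filter (fun x => 0 < q x) with hU
  have memU : ∀ x, x ∈ U ↔ 0 < q x := by intro x; simp [hU]
  have nU : ∀ x, x ∉ U → q x = 0 := fun x hx => le_antisymm (not_lt.mp (fun hh => hx ((memU x).2 hh))) (hq x)
  by_cases hne : U.Nonempty
  · obtain ⟨x0, hx0, hmin⟩ := Finset.exists_min_image U q hne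
    set μ := q x0 with hμ
    have hμ0 : 0 < μ := (memU x0).1 hx0
    set ι : V → ℝ := fun x => if x ∈ U then (1:ℝ) else 0 with hι
    set q' : V → ℝ := fun x => q x - μ * ι x with hq'
    have hq'0 : ∀ x, 0 ≤ q' x := by
      intro x
      by_cases hx : x ∈ U
      · simp [hq', hι, hx, hmin x hx]
      · simp [hq', hι, hx, hq x]
    have hsub : Finset.univ.filter (fun x => 0 < q' x) ⊆ U.erase x0 := by
      intro x hx
      simp only [Finset.mem_filter, Finset.mem_univ, true_and] at hx
      have hxU : x ∈ U := by
        by_contra hxU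
        simp [hq', hι, hxU, nU x hxU] at hx
      refine Finset.mem_erase.2 ⟨?_, hxU⟩
      rintro rfl
      simp [hq', hι, hxU, ← hμ] at hx
    have hcard := Finset.card_le_card hsub
    rw [Finset.card_erase_of_mem hx0] at hcard
    have hpos : 0 < U.card := Finset.card_pos.2 hne
    have h1 := ih _ (by omega) q' hq'0 rfl (by omega)
    have h2 : ∀ x y, |q x - q y| = |q' x - q' y| + μ * |ι x - ι y| := by
      intro x y
      have ax := hq'0 x
      have ay := hq'0 y
      by_cases hx : x ∈ U <;> by_cases hy : y ∈ U
      · simp [hq', hι, hx, hy]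
      · simp [hq', hι, hx, hy, nU y hy] at ax ⊢
        rw [abs_of_nonneg (hq x), abs_of_nonneg (by linarith)]; ring
      · simp [hq', hι, hx, hy, nU x hx] at ay ⊢
        rw [abs_of_nonneg (hq y), abs_of_nonpos (by linarith)]; ring
      · simp [hq', hι, hx, hy, nU y hy]
    have h3 : ∑ x, ∑ y, aI G x y * |q x - q y|
        = ∑ x, ∑ y, aI G x y * |q' x - q' y| + μ * (2 * ∑ x ∈ U, ∑ y ∈ Uᶜ, aI G x y) := by
      rw [← sum_aI_ind G U, Finset.mul_sum, ← Finset.sum_add_distrib]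
      refine Finset.sum_congr rfl fun x _ => ?_
      rw [Finset.mul_sum, ← Finset.sum_add_distrib]
      refine Finset.sum_congr rfl fun y _ => ?_
      rw [h2]; ring
    have h4 : ∑ x, q x = ∑ x, q' x + μ * U.card := by
      simp [hq', hι, Finset.sum_sub_distrib]; ring
    have h5 := hE U (by omega)
    rw [h3, h4]
    nlinarith
  · have : ∀ x, q x = 0 := by
      intro x; apply nU; intro hx; exact hne ⟨x, hx⟩
    simp [this]

lemma cheeger_half {V : Type*} [Fintype V] (G : SimpleGraph V) (h r : ℝ) (hh : 0 ≤ h) (hr : 0 < r)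
    (hE : Expands G h) (hreg : ∀ x, ∑ y, aI G x y = r)
    (g : V → ℝ) (hg : ∀ x, 0 ≤ g x) (hs : 2 * (Finset.univ.filter (fun x => 0 < g x)).card ≤ Fintype.card V) :
    h ^ 2 / r * ∑ x, g x ^ 2 ≤ ∑ x, ∑ y, aI G x y * (g x - g y) ^ 2 := by
  have hreg' : ∀ y, ∑ x, aI G x y = r := by
    intro y; rw [← hreg y]; exact Finset.sum_congr rfl fun x _ => aI_comm G x y
  have hc := coarea G h hE _ (fun x => g x ^ 2) (fun x => by positivity) rfl (by
    convert hs using 4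
    rename_i x _
    constructor
    · intro hx; exact lt_of_le_of_ne (hg x) (by rintro h0; rw [← h0] at hx; norm_num at hx)
    · intro hx; positivity)
  set T := ∑ x, g x ^ 2 with hT
  set D := ∑ x, ∑ y, aI G x y * (g x - g y) ^ 2 with hD
  have hT0 : 0 ≤ T := Finset.sum_nonneg fun x _ => by positivity
  have hF : ∑ x, ∑ y, aI G x y * (g x + g y) ^ 2 ≤ 4 * r * T := by
    have : ∑ x, ∑ y, aI G x y * (g x + g y) ^ 2 ≤ ∑ x, ∑ y, (2 * (aI G x y * g x ^ 2) + 2 * (aI G x y * g y ^ 2)) := by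
      refine Finset.sum_le_sum fun x _ => Finset.sum_le_sum fun y _ => ?_
      have := aI_nonneg G x y
      nlinarith [mul_nonneg this (sq_nonneg (g x - g y))]
    refine this.trans (le_of_eq ?_)
    simp_rw [Finset.sum_add_distrib]
    rw [Finset.sum_comm (f := fun x y => 2 * (aI G x y * g y ^ 2))]
    simp_rw [← Finset.mul_sum, ← Finset.sum_mul, hreg, hreg', ← Finset.mul_sum]
    ring
  have key : ∀ s : ℝ, 0 < s → 2 * (2 * h * T) ≤ s * D + (4 * r * T) / s := by
    intro s hs0
    have h1 : 2 * ∑ x, ∑ y, aI G x y * |g x ^ 2 - g y ^ 2|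
        ≤ s * D + (∑ x, ∑ y, aI G x y * (g x + g y) ^ 2) / s := by
      rw [hD, Finset.mul_sum, Finset.mul_sum, Finset.sum_div, ← Finset.sum_add_distrib]
      refine Finset.sum_le_sum fun x _ => ?_
      rw [Finset.mul_sum, Finset.mul_sum, Finset.sum_div, ← Finset.sum_add_distrib]
      refine Finset.sum_le_sum fun y _ => ?_
      have h2 : |g x ^ 2 - g y ^ 2| = |g x - g y| * (g x + g y) := by
        rw [show g x ^ 2 - g y ^ 2 = (g x - g y) * (g x + g y) by ring, abs_mul,
          abs_of_nonneg (add_nonneg (hg x) (hg y))]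
      rw [h2]
      have h3 : 2 * (|g x - g y| * (g x + g y)) ≤ s * (g x - g y) ^ 2 + (g x + g y) ^ 2 / s := by
        rw [← sq_abs (g x - g y)]
        have : 0 ≤ (s * |g x - g y| - (g x + g y)) ^ 2 / s := by positivity
        have e : (s * |g x - g y| - (g x + g y)) ^ 2 / s
          = s * |g x - g y| ^ 2 + (g x + g y) ^ 2 / s - 2 * (|g x - g y| * (g x + g y)) := by
          field_simp; ring
        linarith
      have := mul_le_mul_of_nonneg_left h3 (aI_nonneg G x y)
      calc _ = aI G x y * (2 * (|g x - g y| * (g x + g y))) := by ring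
        _ ≤ _ := this
        _ = _ := by ring
    have h4 : (∑ x, ∑ y, aI G x y * (g x + g y) ^ 2) / s ≤ (4 * r * T) / s := by gcongr
    linarith
  rcases hh.eq_or_lt with h0 | h0
  · rw [← h0]; simp
    exact Finset.sum_nonneg fun x _ => Finset.sum_nonneg fun y _ => mul_nonneg (aI_nonneg _ _ _) (sq_nonneg _)
  have hk := key (2 * r / h) (by positivity)
  have e1 : 4 * r * T / (2 * r / h) = 2 * h * T := by field_simp; ring
  rw [e1] at hk
  have e2 : 2 * r / h * D = (2 * r / h) * D := rfl
  have h5 : 2 * h * T ≤ 2 * r / h * D := by linarith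
  have h6 := mul_le_mul_of_nonneg_left h5 (by positivity : 0 ≤ h / (2 * r))
  have e3 : h / (2 * r) * (2 * r / h * D) = D := by field_simp
  have e4 : h / (2 * r) * (2 * h * T) = h ^ 2 / r * T := by field_simp
  linarith

lemma exists_median {V : Type*} [Fintype V] [Nonempty V] (f : V → ℝ) :
    ∃ m : ℝ, 2 * (Finset.univ.filter (fun x => m < f x)).card ≤ Fintype.card V ∧
      2 * (Finset.univ.filter (fun x => f x < m)).card ≤ Fintype.card V := by
  -- the least value with few above
  let W := Finset.univ.filter (fun v : V => 2 * (Finset.univ.filter (fun x => f v < f x)).card ≤ Fintype.card V)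
  have hW : W.Nonempty := by
    obtain ⟨v, _, hv⟩ := Finset.exists_max_image (Finset.univ : Finset V) f Finset.univ_nonempty
    refine ⟨v, ?_⟩
    have : Finset.univ.filter (fun x => f v < f x) = ∅ := by
      ext x; simp; exact hv x (Finset.mem_univ x)
    simp [W, this]
  obtain ⟨v, hv, hmin⟩ := Finset.exists_min_image W f hW
  refine ⟨f v, by simpa [W] using hv, ?_⟩
  by_contra hcon
  push Not at hcon
  have hne : (Finset.univ.filter (fun x => f x < f v)).Nonempty := by
    rw [← Finset.card_pos]; omega
  obtain ⟨w, hw, hwmax⟩ := Finset.exists_max_image _ f hne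
  have hwW : w ∉ W := fun h => by
    have := hmin w h
    simp at hw; linarith
  simp only [W, Finset.mem_filter, Finset.mem_univ, true_and, not_le] at hwW
  have hd : Disjoint (Finset.univ.filter (fun x => f x < f v)) (Finset.univ.filter (fun x => f w < f x)) := by
    rw [Finset.disjoint_left]
    intro x hx hx'
    have := hwmax x hx
    simp at hx'; linarith
  have := Finset.card_le_univ ((Finset.univ.filter (fun x => f x < f v)) ∪ (Finset.univ.filter (fun x => f w < f x)))
  rw [Finset.card_union_of_disjoint hd] at this
  omega

lemma poincare {V : Type*} [Fintype V] [Nonempty V] (G : SimpleGraph V) (h r : ℝ) (hh : 0 ≤ h) (hr : 0 < r)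
    (hE : Expands G h) (hreg : ∀ x, ∑ y, aI G x y = r) (f : V → ℝ) :
    h ^ 2 / r * (∑ x, f x ^ 2 - (∑ x, f x) ^ 2 / Fintype.card V) ≤ ∑ x, ∑ y, aI G x y * (f x - f y) ^ 2 := by
  obtain ⟨m, hm1, hm2⟩ := exists_median f
  have h1 := cheeger_half G h r hh hr hE hreg (fun x => max (f x - m) 0) (fun x => le_max_right _ _)
    (by convert hm1 using 4; simp)
  have h2 := cheeger_half G h r hh hr hE hreg (fun x => max (m - f x) 0) (fun x => le_max_right _ _)
    (by convert hm2 using 4; simp)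
  have hn : (0:ℝ) < Fintype.card V := by exact_mod_cast Fintype.card_pos
  have h3 : ∑ x, f x ^ 2 - (∑ x, f x) ^ 2 / Fintype.card V ≤ ∑ x, (max (f x - m) 0) ^ 2 + ∑ x, (max (m - f x) 0) ^ 2 := by
    rw [← Finset.sum_add_distrib]
    have e : ∀ x, (max (f x - m) 0) ^ 2 + (max (m - f x) 0) ^ 2 = f x ^ 2 - 2 * m * f x + m ^ 2 := by
      intro x
      rcases le_total (f x) m with hx | hx
      · rw [max_eq_right (by linarith), max_eq_left (by linarith)]; ring
      · rw [max_eq_left (by linarith), max_eq_right (by linarith)]; ring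
    simp_rw [e, Finset.sum_add_distrib, Finset.sum_sub_distrib, ← Finset.mul_sum]
    simp only [Finset.sum_const, Finset.card_univ, nsmul_eq_mul]
    have : 0 ≤ ((∑ x, f x) - m * Fintype.card V) ^ 2 / Fintype.card V := by positivity
    have e : ((∑ x, f x) - m * Fintype.card V) ^ 2 / Fintype.card V
      = (∑ x, f x) ^ 2 / Fintype.card V - 2 * m * (∑ x, f x) + Fintype.card V * m ^ 2 := by
      field_simp; ring
    linarith
  have h4 : ∑ x, ∑ y, aI G x y * (max (f x - m) 0 - max (f y - m) 0) ^ 2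
      + ∑ x, ∑ y, aI G x y * (max (m - f x) 0 - max (m - f y) 0) ^ 2
      ≤ ∑ x, ∑ y, aI G x y * (f x - f y) ^ 2 := by
    rw [← Finset.sum_add_distrib]
    refine Finset.sum_le_sum fun x _ => ?_
    rw [← Finset.sum_add_distrib]
    refine Finset.sum_le_sum fun y _ => ?_
    rw [← mul_add]
    refine mul_le_mul_of_nonneg_left ?_ (aI_nonneg _ _ _)
    rcases le_total (f x) m with hx | hx <;> rcases le_total (f y) m with hy | hy
    · rw [max_eq_right (a := f x - m) (by linarith), max_eq_right (a := f y - m) (by linarith), max_eq_left (by linarith), max_eq_left (by linarith)]; nlinarith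
    · rw [max_eq_right (a := f x - m) (by linarith), max_eq_left (a := f y - m) (by linarith), max_eq_left (by linarith), max_eq_right (by linarith)]; nlinarith
    · rw [max_eq_left (a := f x - m) (by linarith), max_eq_right (a := f y - m) (by linarith), max_eq_right (by linarith), max_eq_left (by linarith)]; nlinarith
    · rw [max_eq_left (a := f x - m) (by linarith), max_eq_left (a := f y - m) (by linarith), max_eq_right (by linarith), max_eq_right (by linarith)]; nlinarith
  have h5 : 0 ≤ h ^ 2 / r := by positivity
  nlinarith [mul_le_mul_of_nonneg_left h3 h5]

/-- `psi G r S k x`: probability that simple random walk from `x` avoids `S` at times `0,…,k-1`. -/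
noncomputable def psi {V : Type*} [Fintype V] (G : SimpleGraph V) (r : ℝ) (S : Finset V) : ℕ → V → ℝ
  | 0, _ => 1
  | (k + 1), x => if x ∈ S then 0 else (∑ y, aI G x y * psi G r S k y) / r

lemma psi_nonneg {V : Type*} [Fintype V] (G : SimpleGraph V) (r : ℝ) (hr : 0 < r) (S : Finset V) (k : ℕ) (x : V) :
    0 ≤ psi G r S k x := by
  induction k generalizing x with
  | zero => simp [psi]
  | succ k ih =>
    unfold psi; split_ifs
    · rfl
    · exact div_nonneg (Finset.sum_nonneg fun y _ => mul_nonneg (aI_nonneg _ _ _) (ih y)) hr.le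

/-- Rayleigh bound, nonnegative-spectrum side. -/
lemma rayleigh_upper {V : Type*} [Fintype V] [Nonempty V] (G : SimpleGraph V) (h r : ℝ) (hh : 0 ≤ h) (hr : 0 < r)
    (hE : Expands G h) (hreg : ∀ x, ∑ y, aI G x y = r) (S : Finset V) (f : V → ℝ) (hf : ∀ x ∈ S, f x = 0) :
    (∑ x, ∑ y, aI G x y * (f x * f y)) / r
      ≤ (1 - h ^ 2 / (2 * r ^ 2) * (S.card / Fintype.card V)) * ∑ x, f x ^ 2 := by
  have hP := poincare G h r hh hr hE hreg f
  have hn : (0:ℝ) < Fintype.card V := by exact_mod_cast Fintype.card_pos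
  have hreg' : ∀ y, ∑ x, aI G x y = r := by
    intro y; rw [← hreg y]; exact Finset.sum_congr rfl fun x _ => aI_comm G x y
  have e1 : ∑ x, ∑ y, aI G x y * (f x - f y) ^ 2
      = 2 * r * ∑ x, f x ^ 2 - 2 * ∑ x, ∑ y, aI G x y * (f x * f y) := by
    have : ∀ x y, aI G x y * (f x - f y) ^ 2
      = aI G x y * f x ^ 2 + aI G x y * f y ^ 2 - 2 * (aI G x y * (f x * f y)) := by intros; ring
    simp_rw [this, Finset.sum_sub_distrib, Finset.sum_add_distrib]
    rw [Finset.sum_comm (f := fun x y => aI G x y * f y ^ 2)]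
    simp_rw [← Finset.mul_sum, ← Finset.sum_mul, hreg, hreg', ← Finset.mul_sum]
    ring
  have e2 : (∑ x, f x) ^ 2 ≤ (Fintype.card V - S.card) * ∑ x, f x ^ 2 := by
    have a1 : ∑ x, f x = ∑ x ∈ Sᶜ, f x := by
      symm; apply Finset.sum_subset (Finset.subset_univ _)
      intro x _ hx; exact hf x (by simpa using hx)
    have a2 : ∑ x, f x ^ 2 = ∑ x ∈ Sᶜ, f x ^ 2 := by
      symm; apply Finset.sum_subset (Finset.subset_univ _)
      intro x _ hx; rw [hf x (by simpa using hx)]; ring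
    rw [a1, a2]
    have := sq_sum_le_card_mul_sum_sq (s := Sᶜ) (f := f)
    rw [Finset.card_compl, Nat.cast_sub (Finset.card_le_univ S)] at this
    exact this
  set T := ∑ x, f x ^ 2 with hT
  set Q := ∑ x, ∑ y, aI G x y * (f x * f y) with hQ
  set n : ℝ := (Fintype.card V : ℝ) with hn'
  have e3 : (∑ x, f x) ^ 2 / n ≤ (n - S.card) * T / n := by gcongr
  have e4 : (n - S.card) * T / n = T - S.card / n * T := by field_simp
  have e5 : h ^ 2 / r * (S.card / n * T) ≤ h ^ 2 / r * (T - (∑ x, f x) ^ 2 / n) := by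
    apply mul_le_mul_of_nonneg_left _ (by positivity); linarith
  rw [div_le_iff₀ hr]
  have e6 : (1 - h ^ 2 / (2 * r ^ 2) * (S.card / n)) * T * r
     = r * T - (h ^ 2 / r * (S.card / n * T)) / 2 := by field_simp
  rw [e6]; linarith

lemma rayleigh_abs {V : Type*} [Fintype V] [Nonempty V] (G : SimpleGraph V) (h r : ℝ) (hh : 0 ≤ h) (hr : 0 < r)
    (hE : Expands G h) (hreg : ∀ x, ∑ y, aI G x y = r) (S : Finset V) (f : V → ℝ) (hf : ∀ x ∈ S, f x = 0) :
    -((∑ x, ∑ y, aI G x y * (f x * f y)) / r)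
      ≤ (1 - h ^ 2 / (2 * r ^ 2) * (S.card / Fintype.card V)) * ∑ x, f x ^ 2 := by
  have h1 := rayleigh_upper G h r hh hr hE hreg S (fun x => |f x|) (fun x hx => by simp [hf x hx])
  simp only [sq_abs] at h1
  refine le_trans ?_ h1
  rw [← neg_div]
  gcongr
  rw [← Finset.sum_neg_distrib]
  refine Finset.sum_le_sum fun x _ => ?_
  rw [← Finset.sum_neg_distrib]
  refine Finset.sum_le_sum fun y _ => ?_
  have := neg_abs_le (f x * f y)
  rw [abs_mul] at this
  have := aI_nonneg G x y
  nlinarith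

lemma step_norm {V : Type*} [Fintype V] [Nonempty V] (G : SimpleGraph V) (h r : ℝ) (hh : 0 ≤ h) (hr : 0 < r)
    (hE : Expands G h) (hreg : ∀ x, ∑ y, aI G x y = r) (S : Finset V) (f : V → ℝ) (hf : ∀ x ∈ S, f x = 0)
    (l : ℝ) (hl : l = 1 - h ^ 2 / (2 * r ^ 2) * (S.card / Fintype.card V)) (hl0 : 0 < l) :
    ∑ x, (if x ∈ S then 0 else (∑ y, aI G x y * f y) / r) ^ 2 ≤ l ^ 2 * ∑ x, f x ^ 2 := by
  set M : V → ℝ := fun x => if x ∈ S then 0 else (∑ y, aI G x y * f y) / r with hM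
  have hMS : ∀ x ∈ S, M x = 0 := by intro x hx; simp [hM, hx]
  set g : V → ℝ := fun x => M x / l with hg
  have hgS : ∀ x ∈ S, g x = 0 := by intro x hx; simp [hg, hMS x hx]
  have h1 := rayleigh_upper G h r hh hr hE hreg S (fun x => f x + g x) (fun x hx => by simp [hf x hx, hgS x hx])
  have h2 := rayleigh_abs G h r hh hr hE hreg S (fun x => f x - g x) (fun x hx => by simp [hf x hx, hgS x hx])
  rw [← hl] at h1 h2
  -- bilinear form
  have b1 : (∑ x, ∑ y, aI G x y * (g x * f y)) / r = ∑ x, g x * M x := by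
    rw [Finset.sum_div]
    refine Finset.sum_congr rfl fun x _ => ?_
    by_cases hx : x ∈ S
    · simp [hgS x hx]
    · simp only [hM, hx, if_false]
      rw [mul_div_assoc', Finset.mul_sum]
      congr 1
      refine Finset.sum_congr rfl fun y _ => by ring
  have b2 : ∑ x, ∑ y, aI G x y * (f x * g y) = ∑ x, ∑ y, aI G x y * (g x * f y) := by
    rw [Finset.sum_comm]
    refine Finset.sum_congr rfl fun x _ => Finset.sum_congr rfl fun y _ => ?_
    rw [aI_comm]; ring
  have b3 : ∑ x, ∑ y, aI G x y * ((f x + g x) * (f y + g y)) - ∑ x, ∑ y, aI G x y * ((f x - g x) * (f y - g y))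
      = 4 * ∑ x, ∑ y, aI G x y * (g x * f y) := by
    have : 4 * ∑ x, ∑ y, aI G x y * (g x * f y) = ∑ x, ∑ y, (2 * (aI G x y * (f x * g y)) + 2 * (aI G x y * (g x * f y))) := by
      simp_rw [Finset.sum_add_distrib, ← Finset.mul_sum]
      rw [b2]; ring
    rw [this, ← Finset.sum_sub_distrib]
    refine Finset.sum_congr rfl fun x _ => ?_
    rw [← Finset.sum_sub_distrib]
    refine Finset.sum_congr rfl fun y _ => by ring
  have b4 : ∑ x, (f x + g x) ^ 2 + ∑ x, (f x - g x) ^ 2 = 2 * ∑ x, f x ^ 2 + 2 * ∑ x, g x ^ 2 := by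
    rw [← Finset.sum_add_distrib, Finset.mul_sum, Finset.mul_sum, ← Finset.sum_add_distrib]
    refine Finset.sum_congr rfl fun x _ => by ring
  have b5 : ∑ x, g x * M x = (∑ x, M x ^ 2) / l := by
    rw [Finset.sum_div]; refine Finset.sum_congr rfl fun x _ => by simp only [hg]; ring
  have b6 : ∑ x, g x ^ 2 = (∑ x, M x ^ 2) / l ^ 2 := by
    rw [Finset.sum_div]; refine Finset.sum_congr rfl fun x _ => by simp only [hg]; ring
  have b7 : 4 * ((∑ x, M x ^ 2) / l) ≤ l * (2 * ∑ x, f x ^ 2 + 2 * ((∑ x, M x ^ 2) / l ^ 2)) := by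
    rw [← b6, ← b4, ← b5, ← b1, mul_div_assoc', ← b3, sub_div]
    linarith
  have b8 := mul_le_mul_of_nonneg_left b7 hl0.le
  have c1 : l * (4 * ((∑ x, M x ^ 2) / l)) = 4 * ∑ x, M x ^ 2 := by field_simp
  have c2 : l * (l * (2 * ∑ x, f x ^ 2 + 2 * ((∑ x, M x ^ 2) / l ^ 2))) = 2 * (l ^ 2 * ∑ x, f x ^ 2) + 2 * ∑ x, M x ^ 2 := by
    field_simp
  linarith

lemma psi_bound {V : Type*} [Fintype V] [Nonempty V] (G : SimpleGraph V) (h r : ℝ) (hh : 0 ≤ h) (hr : 0 < r)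
    (hE : Expands G h) (hreg : ∀ x, ∑ y, aI G x y = r) (S : Finset V)
    (l : ℝ) (hl : l = 1 - h ^ 2 / (2 * r ^ 2) * (S.card / Fintype.card V)) (hl0 : 0 < l) (k : ℕ) (u : V) :
    psi G r S (k + 1) u ≤ l ^ k * Fintype.card V := by
  have hn : (1:ℝ) ≤ Fintype.card V := by exact_mod_cast Fintype.card_pos
  have main : ∑ x, psi G r S (k + 1) x ^ 2 ≤ (l ^ k) ^ 2 * Fintype.card V := by
    induction k with
    | zero =>
      simp only [pow_zero, one_pow, one_mul]
      have : ∀ x, psi G r S (0 + 1) x ^ 2 ≤ 1 := by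
        intro x
        simp only [psi, mul_one, hreg, div_self hr.ne']
        split_ifs <;> norm_num
      calc _ ≤ ∑ x : V, (1:ℝ) := Finset.sum_le_sum fun x _ => this x
        _ = _ := by simp
    | succ k ih =>
      have := step_norm G h r hh hr hE hreg S (psi G r S (k + 1)) (fun x hx => by simp [psi, hx]) l hl hl0
      calc _ = ∑ x, (if x ∈ S then 0 else (∑ y, aI G x y * psi G r S (k + 1) y) / r) ^ 2 := by
            refine Finset.sum_congr rfl fun x _ => by rw [psi]
        _ ≤ _ := this
        _ ≤ l ^ 2 * ((l ^ k) ^ 2 * Fintype.card V) := by gcongr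
        _ = _ := by ring
  have h1 : psi G r S (k + 1) u ^ 2 ≤ ∑ x, psi G r S (k + 1) x ^ 2 :=
    Finset.single_le_sum (f := fun x => psi G r S (k + 1) x ^ 2) (fun x _ => sq_nonneg _) (Finset.mem_univ u)
  have h2 : (l ^ k) ^ 2 * Fintype.card V ≤ (l ^ k * Fintype.card V) ^ 2 := by
    rw [mul_pow]; gcongr; nlinarith
  exact le_of_not_gt fun hlt => absurd (h1.trans (main.trans h2)) (not_le.2 (pow_lt_pow_left₀ hlt (by positivity) two_ne_zero))

def redAt {V : Type*} (G : SimpleGraph V) : List V → Prop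
  | [] => True
  | (v :: h) => ¬ ∃ y : V, G.Adj v y ∧ s(v, y) ∉ trav (v :: h)

noncomputable def baseZ {V : Type*} (G : SimpleGraph V) (u : V) : List V → V
  | [] => u
  | [x] => x
  | (y :: v :: h) => if redAt G (v :: h) then y else baseZ G u (v :: h)

noncomputable def nred {V : Type*} (G : SimpleGraph V) : List V → ℕ
  | [] => 0
  | [_] => 0
  | (_ :: v :: h) => if redAt G (v :: h) then nred G (v :: h) + 1 else nred G (v :: h)

noncomputable def prevZ {V : Type*} (G : SimpleGraph V) : List V → Finset V
  | [] => ∅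
  | [_] => ∅
  | (_ :: v :: h) => if redAt G (v :: h) then insert v (prevZ G (v :: h)) else prevZ G (v :: h)

noncomputable def bdeg {V : Type*} [Fintype V] (G : SimpleGraph V) (h : List V) (x : V) : ℕ :=
  (Finset.univ.filter (fun y => G.Adj x y ∧ s(x, y) ∉ trav h)).card

lemma trav_cons {V : Type*} (y v : V) (h : List V) : trav (y :: v :: h) = s(y, v) :: trav (v :: h) := by
  simp [trav]

lemma trav_single {V : Type*} (y : V) : trav [y] = [] := by simp [trav]

def BGraph {V : Type*} [Fintype V] (G : SimpleGraph V) (h : List V) (B : SimpleGraph V) : Prop :=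
  B ≤ G ∧ (∀ x, Even (Finset.univ.filter (fun y => B.Adj x y)).card) ∧
    (∀ x, x ∉ h → ∀ y, G.Adj x y → B.Adj x y) ∧ (∀ x ∈ prevZ G h, ∀ y, ¬ B.Adj x y)

structure HInv {V : Type*} [Fintype V] (G : SimpleGraph V) (u : V) (c : V) (h : List V) : Prop where
  len : h.length ≤ nred G (c :: h) + (trav (c :: h)).toFinset.card
  sub : ∀ e ∈ trav (c :: h), e ∈ G.edgeSet
  ends : ∀ e ∈ trav (c :: h), ∀ x ∈ e, x ∈ c :: h
  par : ∀ x, Even (bdeg G (c :: h) x + (if x = c then 1 else 0) + (if x = baseZ G u (c :: h) then 1 else 0))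
  dead : ∀ x ∈ prevZ G (c :: h), ∀ y, G.Adj x y → s(x, y) ∈ trav (c :: h)
  bg : ∃ B, BGraph G (c :: h) B

lemma deg_card {V : Type*} [Fintype V] (G : SimpleGraph V) (x : V) :
    (Finset.univ.filter (fun y => G.Adj x y)).card = (G.neighborSet x).ncard := by
  rw [← Set.ncard_coe_finset]; congr 1; ext; simp

lemma inv_single {V : Type*} [Fintype V] (G : SimpleGraph V) (r : ℕ) (hre : Even r)
    (hreg : ∀ x, (G.neighborSet x).ncard = r) (u c : V) : HInv G u c [] := by
  refine ⟨by simp, by simp [trav_single], by simp [trav_single], ?_, by simp [prevZ], ⟨G, le_rfl, ?_, ?_, ?_⟩⟩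
  · intro x
    have : bdeg G [c] x = r := by
      rw [← hreg x, ← deg_card]; simp [bdeg, trav_single]
    rw [this, add_assoc]
    refine hre.add ?_
    simp only [baseZ]
    by_cases hx : x = c <;> simp [hx]
  · intro x; rw [deg_card, hreg]; exact hre
  · intro x _ y h; exact h
  · simp [prevZ]

lemma bdeg_blue {V : Type*} [Fintype V] (G : SimpleGraph V) (h : List V) (v y : V)
    (hvy : G.Adj v y) (hn : s(v, y) ∉ trav (v :: h)) (x : V) :
    bdeg G (v :: h) x = bdeg G (y :: v :: h) x + (if x = v then 1 else 0) + (if x = y then 1 else 0) := by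
  have hne : v ≠ y := hvy.ne
  unfold bdeg
  rw [trav_cons]
  by_cases hx : x = v
  · subst hx
    have : Finset.univ.filter (fun t => G.Adj x t ∧ s(x, t) ∉ trav (x :: h))
       = insert y (Finset.univ.filter (fun t => G.Adj x t ∧ s(x, t) ∉ s(y, x) :: trav (x :: h))) := by
      ext t
      simp only [Finset.mem_filter, Finset.mem_univ, true_and, Finset.mem_insert, List.mem_cons, not_or]
      constructor
      · rintro ⟨a, b⟩
        by_cases hty : t = y
        · exact Or.inl hty
        · refine Or.inr ⟨a, ?_, b⟩
          intro hs; rw [Sym2.eq_iff] at hs; grind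
      · rintro (rfl | ⟨a, _, b⟩)
        · exact ⟨hvy, hn⟩
        · exact ⟨a, b⟩
    rw [this, Finset.card_insert_of_notMem (by simp [Sym2.eq_swap])]
    simp [hne]
  · by_cases hx' : x = y
    · subst hx'
      have : Finset.univ.filter (fun t => G.Adj x t ∧ s(x, t) ∉ trav (v :: h))
         = insert v (Finset.univ.filter (fun t => G.Adj x t ∧ s(x, t) ∉ s(x, v) :: trav (v :: h))) := by
        ext t
        simp only [Finset.mem_filter, Finset.mem_univ, true_and, Finset.mem_insert, List.mem_cons, not_or]
        constructor
        · rintro ⟨a, b⟩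
          by_cases hty : t = v
          · exact Or.inl hty
          · refine Or.inr ⟨a, ?_, b⟩
            intro hs; rw [Sym2.eq_iff] at hs; grind
        · rintro (rfl | ⟨a, _, b⟩)
          · exact ⟨hvy.symm, by rwa [Sym2.eq_swap]⟩
          · exact ⟨a, b⟩
      rw [this, Finset.card_insert_of_notMem (by simp)]
      simp [hne.symm]
    · simp only [hx, hx', if_false, add_zero]
      congr 1
      ext t
      simp only [Finset.mem_filter, Finset.mem_univ, true_and, List.mem_cons, not_or]
      constructor
      · rintro ⟨a, b⟩
        refine ⟨a, ?_, b⟩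
        intro hs; rw [Sym2.eq_iff] at hs; grind
      · rintro ⟨a, _, b⟩; exact ⟨a, b⟩

lemma inv_blue {V : Type*} [Fintype V] (G : SimpleGraph V) (u : V) (h : List V) (v y : V)
    (hI : HInv G u v h) (hvy : G.Adj v y) (hn : s(v, y) ∉ trav (v :: h)) : HInv G u y (v :: h) := by
  have hred : ¬ redAt G (v :: h) := by simp only [redAt, not_not]; exact ⟨y, hvy, hn⟩
  have hz : baseZ G u (y :: v :: h) = baseZ G u (v :: h) := by simp [baseZ, hred]
  have hp : prevZ G (y :: v :: h) = prevZ G (v :: h) := by simp [prevZ, hred]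
  have hnr : nred G (y :: v :: h) = nred G (v :: h) := by simp [nred, hred]
  have hn' : s(y, v) ∉ trav (v :: h) := by rwa [Sym2.eq_swap]
  constructor
  · rw [hnr, trav_cons, List.toFinset_cons, Finset.card_insert_of_notMem (by simpa using hn')]
    have := hI.len
    simp; omega
  · intro e he
    rw [trav_cons, List.mem_cons] at he
    rcases he with rfl | he
    · exact hvy.symm
    · exact hI.sub e he
  · intro e he x hx
    rw [trav_cons, List.mem_cons] at he
    rcases he with rfl | he
    · simp at hx; simp; tauto
    · exact List.mem_cons_of_mem _ (hI.ends e he x hx)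
  · intro x
    have := hI.par x
    rw [bdeg_blue G h v y hvy hn x] at this
    rw [hz]
    rw [Nat.even_iff] at this ⊢
    omega
  · intro x hx t ht
    rw [hp] at hx
    rw [trav_cons]
    exact List.mem_cons_of_mem _ (hI.dead x hx t ht)
  · obtain ⟨B, h1, h2, h3, h4⟩ := hI.bg
    refine ⟨B, h1, h2, fun x hx => h3 x (fun hh => hx (List.mem_cons_of_mem _ hh)), ?_⟩
    rw [hp]; exact h4

lemma red_base {V : Type*} [Fintype V] (G : SimpleGraph V) (u : V) (h : List V) (v : V)
    (hI : HInv G u v h) (hred : redAt G (v :: h)) : baseZ G u (v :: h) = v := by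
  by_contra hne
  have := hI.par v
  have h0 : bdeg G (v :: h) v = 0 := by
    unfold bdeg
    rw [Finset.card_eq_zero, Finset.filter_eq_empty_iff]
    intro y _ hy
    exact hred ⟨y, hy⟩
  rw [h0, if_pos rfl, if_neg (fun hh => hne hh.symm)] at this
  simp at this

lemma inv_red {V : Type*} [Fintype V] (G : SimpleGraph V) (u : V) (h : List V) (v y : V)
    (hI : HInv G u v h) (hred : redAt G (v :: h)) (hvy : G.Adj v y) : HInv G u y (v :: h) := by
  have hmem : s(v, y) ∈ trav (v :: h) := by
    by_contra hn; exact hred ⟨y, hvy, hn⟩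
  have hb := red_base G u h v hI hred
  have hz : baseZ G u (y :: v :: h) = y := by simp [baseZ, hred]
  have hp : prevZ G (y :: v :: h) = insert v (prevZ G (v :: h)) := by simp [prevZ, hred]
  have hnr : nred G (y :: v :: h) = nred G (v :: h) + 1 := by simp [nred, hred]
  have hmem' : s(y, v) ∈ trav (v :: h) := by rwa [Sym2.eq_swap]
  have htr : ∀ e, e ∈ trav (y :: v :: h) ↔ e ∈ trav (v :: h) := by
    intro e; rw [trav_cons, List.mem_cons]
    constructor
    · rintro (rfl | he); exacts [hmem', he]
    · exact Or.inr
  have htf : (trav (y :: v :: h)).toFinset = (trav (v :: h)).toFinset := by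
    ext e; simp [htr]
  have hbd : ∀ x, bdeg G (y :: v :: h) x = bdeg G (v :: h) x := by
    intro x; simp [bdeg, htr]
  have heven : ∀ x, Even (bdeg G (v :: h) x) := by
    intro x
    have := hI.par x
    rw [hb] at this
    rw [Nat.even_iff] at this ⊢
    split_ifs at this <;> omega
  have hdead : ∀ x ∈ prevZ G (y :: v :: h), ∀ t, G.Adj x t → s(x, t) ∈ trav (v :: h) := by
    intro x hx t ht
    rw [hp, Finset.mem_insert] at hx
    rcases hx with rfl | hx
    · by_contra hn; exact hred ⟨t, ht, hn⟩
    · exact hI.dead x hx t ht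
  constructor
  · rw [hnr, htf]
    have := hI.len
    simp; omega
  · intro e he; exact hI.sub e ((htr e).1 he)
  · intro e he x hx
    exact List.mem_cons_of_mem _ (hI.ends e ((htr e).1 he) x hx)
  · intro x
    rw [hbd, hz, add_assoc]
    refine (heven x).add ?_
    by_cases hx : x = y <;> simp [hx]
  · intro x hx t ht
    rw [htr]; exact hdead x hx t ht
  · refine ⟨⟨fun x t => G.Adj x t ∧ s(x, t) ∉ trav (v :: h), ?_, ?_⟩, ?_, ?_, ?_, ?_⟩
    · exact ⟨fun x t ⟨a, b⟩ => ⟨a.symm, by rwa [Sym2.eq_swap]⟩⟩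
    · exact ⟨fun x hx => G.loopless.irrefl x hx.1⟩
    · intro x t hxt; exact hxt.1
    · intro x
      have := heven x
      unfold bdeg at this
      convert this
    · intro x hx t ht
      refine ⟨ht, fun hm => hx (List.mem_cons_of_mem _ (hI.ends _ hm x (by simp)))⟩
    · intro x hx t ht
      exact ht.2 (hdead x hx t ht.1)

lemma traj_inv {V : Type*} [Fintype V] (G : SimpleGraph V) (r : ℕ) (hre : Even r)
    (hreg : ∀ x, (G.neighborSet x).ncard = r) (A : List V → V) (hA : ValidRule G A) (u : V)
    (h : List V) : ∀ c, trajProb G A u (c :: h) ≠ 0 → HInv G u c h := by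
  induction h with
  | nil => intro c _; exact inv_single G r hre hreg u c
  | cons v h ih =>
    intro y hy
    rw [trajProb] at hy
    have h1 := left_ne_zero_of_mul hy
    have hI := ih v (right_ne_zero_of_mul hy)
    rw [eStep] at h1
    split_ifs at h1 with h2 h3 h4
    · subst h3
      obtain ⟨a, b⟩ := hA v h h2
      exact inv_blue G u h v _ hI a b
    · exact absurd rfl h1
    · exact inv_red G u h v y hI (by simpa only [redAt] using h2) h4
    · exact absurd rfl h1

lemma reg_aI {V : Type*} [Fintype V] (G : SimpleGraph V) (r : ℕ)
    (hreg : ∀ x, (G.neighborSet x).ncard = r) (x : V) : ∑ y, aI G x y = r := by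
  rw [← hreg x, ← deg_card]; simp [aI]

noncomputable def Psi {V : Type*} [Fintype V] (G : SimpleGraph V) (r : ℕ) (S : Finset V) (u : V) (k : ℕ)
    (h : List V) : ℝ :=
  if Disjoint (prevZ G h) S then psi G r S (k - nred G h) (baseZ G u h) else 0

lemma Psi_nonneg {V : Type*} [Fintype V] (G : SimpleGraph V) (r : ℕ) (hr : 0 < r) (S : Finset V) (u : V) (k : ℕ)
    (h : List V) : 0 ≤ Psi G r S u k h := by
  unfold Psi; split_ifs
  · exact psi_nonneg G r (by exact_mod_cast hr) S _ _
  · rfl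

lemma Psi_step {V : Type*} [Fintype V] (G : SimpleGraph V) (r : ℕ) (hr : 0 < r)
    (hreg : ∀ x, (G.neighborSet x).ncard = r) (A : List V → V) (S : Finset V) (u : V) (k : ℕ)
    (c : V) (h : List V) (hI : HInv G u c h) :
    ∑ x, eStep G A (c :: h) x * Psi G r S u k (x :: c :: h) ≤ Psi G r S u k (c :: h) := by
  have hr' : (0:ℝ) < r := by exact_mod_cast hr
  by_cases hred : redAt G (c :: h)
  · have hb := red_base G u h c hI hred
    have he : ∀ x, eStep G A (c :: h) x = aI G c x / r := by
      intro x
      rw [eStep, if_neg (by simpa only [redAt] using hred), hreg c]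
      unfold aI; split_ifs <;> simp
    have hP : ∀ x, Psi G r S u k (x :: c :: h)
        = if Disjoint (insert c (prevZ G (c :: h))) S then psi G r S (k - (nred G (c :: h) + 1)) x else 0 := by
      intro x; simp [Psi, prevZ, nred, baseZ, hred]
    simp_rw [he, hP]
    by_cases hd : Disjoint (insert c (prevZ G (c :: h))) S
    · simp only [hd, if_true]
      rw [Finset.disjoint_insert_left] at hd
      rw [Psi, if_pos hd.2, hb]
      have e : ∑ x, aI G c x / r * psi G r S (k - (nred G (c :: h) + 1)) x
          = (∑ x, aI G c x * psi G r S (k - (nred G (c :: h) + 1)) x) / r := by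
        rw [Finset.sum_div]; exact Finset.sum_congr rfl fun x _ => by ring
      rw [e]
      rcases hk : k - nred G (c :: h) with _ | j
      · have : k - (nred G (c :: h) + 1) = 0 := by omega
        rw [this]; simp only [psi, mul_one]; rw [reg_aI G r hreg c, div_self hr'.ne']
      · have : k - (nred G (c :: h) + 1) = j := by omega
        rw [this, psi, if_neg hd.1]
    · simp only [hd, if_false, mul_zero, Finset.sum_const_zero]
      exact Psi_nonneg G r hr S u k _
  · have hP : ∀ x, Psi G r S u k (x :: c :: h) = Psi G r S u k (c :: h) := by
      intro x; simp [Psi, prevZ, nred, baseZ, hred]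
    simp_rw [hP, ← Finset.sum_mul]
    have he : ∀ x, eStep G A (c :: h) x = if x = A (c :: h) then 1 else 0 := by
      intro x
      rw [eStep, if_pos (by simpa only [redAt, not_not] using hred)]
    simp [he]

lemma eStep_nonneg {V : Type*} [Fintype V] (G : SimpleGraph V) (A : List V → V) (h : List V) (x : V) :
    0 ≤ eStep G A h x := by
  cases h with
  | nil => simp [eStep]
  | cons v h => rw [eStep]; split_ifs <;> positivity

lemma trajProb_nonneg {V : Type*} [Fintype V] (G : SimpleGraph V) (A : List V → V) (u : V) :
    ∀ h : List V, 0 ≤ trajProb G A u h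
  | [] => by simp [trajProb]
  | [x] => by rw [trajProb]; split_ifs <;> norm_num
  | (x :: y :: h) => by
    rw [trajProb]; exact mul_nonneg (eStep_nonneg _ _ _ _) (trajProb_nonneg G A u (y :: h))

noncomputable def Ex {V : Type*} [Fintype V] (G : SimpleGraph V) (A : List V → V) (u : V) (t : ℕ)
    (F : List V → ℝ) : ℝ := ∑ f : Fin (t + 1) → V, trajProb G A u (List.ofFn f) * F (List.ofFn f)

lemma Ex_succ {V : Type*} [Fintype V] (G : SimpleGraph V) (A : List V → V) (u : V) (t : ℕ)
    (F : List V → ℝ) : Ex G A u (t + 1) F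
      = ∑ f : Fin (t + 1) → V, trajProb G A u (List.ofFn f) *
          ∑ x, eStep G A (List.ofFn f) x * F (x :: List.ofFn f) := by
  unfold Ex
  rw [← (Fin.consEquiv (fun _ : Fin (t + 2) => V)).sum_comp, Fintype.sum_prod_type_right]
  refine Finset.sum_congr rfl fun f _ => ?_
  rw [Finset.mul_sum]
  refine Finset.sum_congr rfl fun x _ => ?_
  have : List.ofFn ((Fin.consEquiv (fun _ : Fin (t + 2) => V)) (x, f)) = x :: List.ofFn f := by
    simp [Fin.consEquiv, List.ofFn_succ]
  rw [this]
  have h2 : List.ofFn f = f 0 :: List.ofFn (fun i : Fin t => f i.succ) := List.ofFn_succ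
  rw [h2, trajProb]; ring

lemma Ex_Psi {V : Type*} [Fintype V] (G : SimpleGraph V) (r : ℕ) (hr : 0 < r) (hre : Even r)
    (hreg : ∀ x, (G.neighborSet x).ncard = r) (A : List V → V) (hA : ValidRule G A) (S : Finset V) (u : V)
    (k t : ℕ) : Ex G A u t (Psi G r S u k) ≤ psi G r S k u := by
  induction t with
  | zero =>
    unfold Ex
    rw [← (Equiv.funUnique (Fin 1) V).symm.sum_comp]
    simp [trajProb, Psi, prevZ, nred, baseZ]
  | succ t ih =>
    refine le_trans ?_ ih
    rw [Ex_succ]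
    unfold Ex
    refine Finset.sum_le_sum fun f _ => ?_
    have h2 : List.ofFn f = f 0 :: List.ofFn (fun i : Fin t => f i.succ) := List.ofFn_succ
    rw [h2]
    by_cases h0 : trajProb G A u (f 0 :: List.ofFn (fun i : Fin t => f i.succ)) = 0
    · simp [h0]
    · exact mul_le_mul_of_nonneg_left
        (Psi_step G r hr hreg A S u k _ _ (traj_inv G r hre hreg A hA u _ _ h0)) (trajProb_nonneg _ _ _ _)

noncomputable def walksF {V : Type*} [Fintype V] (G : SimpleGraph V) : ℕ → V → Finset (List V)
  | 0, v => {[v]}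
  | (L + 1), v => (Finset.univ.filter (fun y => G.Adj v y)).biUnion fun y => (walksF G L y).image (List.cons v)

lemma walksF_card {V : Type*} [Fintype V] (G : SimpleGraph V) (r : ℕ)
    (hreg : ∀ x, (G.neighborSet x).ncard = r) (L : ℕ) (v : V) : (walksF G L v).card ≤ r ^ L := by
  induction L generalizing v with
  | zero => simp [walksF]
  | succ L ih =>
    rw [walksF]
    calc _ ≤ ∑ y ∈ Finset.univ.filter (fun y => G.Adj v y), ((walksF G L y).image (List.cons v)).card :=
          Finset.card_biUnion_le
      _ ≤ ∑ y ∈ Finset.univ.filter (fun y => G.Adj v y), r ^ L :=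
          Finset.sum_le_sum fun y _ => Finset.card_image_le.trans (ih y)
      _ = r ^ (L + 1) := by rw [Finset.sum_const, deg_card, hreg, smul_eq_mul]; ring

lemma walk_mem {V : Type*} [Fintype V] (G B : SimpleGraph V) (hB : B ≤ G) {v w : V} (p : B.Walk v w) :
    p.support ∈ walksF G p.length v := by
  induction p with
  | nil => simp [walksF]
  | cons hadj p ih =>
    rw [SimpleGraph.Walk.support_cons, SimpleGraph.Walk.length_cons, walksF]
    refine Finset.mem_biUnion.2 ⟨_, by simpa using hB hadj, Finset.mem_image_of_mem _ ih⟩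

lemma exists_closed_walk {V : Type*} [Fintype V] (B : SimpleGraph V) (v : V) (k : ℕ)
    (hk : k + 1 ≤ (Finset.univ.filter (fun x => B.Reachable v x)).card) :
    ∃ p : B.Walk v v, p.length = 2 * k ∧ p.support.toFinset.card = k + 1 := by
  induction k with
  | zero => exact ⟨SimpleGraph.Walk.nil, by simp, by simp⟩
  | succ k ih =>
    obtain ⟨p, hp1, hp2⟩ := ih (by omega)
    -- a reachable vertex outside the support
    obtain ⟨x, hx, hxs⟩ : ∃ x ∈ Finset.univ.filter (fun x => B.Reachable v x), x ∉ p.support.toFinset := by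
      by_contra hcon
      push Not at hcon
      have := Finset.card_le_card (s := Finset.univ.filter (fun x => B.Reachable v x)) (t := p.support.toFinset) hcon
      omega
    simp at hx
    obtain ⟨q⟩ := hx
    obtain ⟨d, hd, h1, h2⟩ := q.exists_boundary_dart {x | x ∈ p.support} (by simp) (by simpa using hxs)
    simp only [Set.mem_ofPred_eq] at h1 h2
    refine ⟨(p.takeUntil d.fst h1).append (SimpleGraph.Walk.cons d.adj (SimpleGraph.Walk.cons d.adj.symm (p.dropUntil d.fst h1))), ?_, ?_⟩
    · rw [SimpleGraph.Walk.length_append, SimpleGraph.Walk.length_cons, SimpleGraph.Walk.length_cons]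
      have := congrArg SimpleGraph.Walk.length (p.take_spec h1)
      rw [SimpleGraph.Walk.length_append] at this
      omega
    · have : ((p.takeUntil d.fst h1).append (SimpleGraph.Walk.cons d.adj (SimpleGraph.Walk.cons d.adj.symm (p.dropUntil d.fst h1)))).support.toFinset
          = insert d.snd p.support.toFinset := by
        ext z
        have e : z ∈ p.support ↔ z ∈ (p.takeUntil d.fst h1).support ∨ z ∈ (p.dropUntil d.fst h1).support := by
          conv_lhs => rw [← p.take_spec h1]
          rw [SimpleGraph.Walk.mem_support_append_iff]
        have e2 : d.fst ∈ (p.dropUntil d.fst h1).support := SimpleGraph.Walk.start_mem_support _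
        simp only [List.mem_toFinset, SimpleGraph.Walk.mem_support_append_iff, SimpleGraph.Walk.support_cons,
          List.mem_cons, Finset.mem_insert, e]
        constructor
        · rintro (h | rfl | rfl | h) <;> tauto
        · tauto
      rw [this, Finset.card_insert_of_notMem (by simpa using h2), hp2]

def SparseG {V : Type*} [Fintype V] (G : SimpleGraph V) (l : ℕ) : Prop :=
  ∀ U : Finset V, 1 ≤ U.card → U.card ≤ l → ∑ x ∈ U, ∑ y ∈ U, aI G x y ≤ 2 * U.card

lemma cover_walk {V : Type*} [Fintype V] (G : SimpleGraph V) (r l : ℕ) (hr : 4 ≤ r) (hl : 1 ≤ l)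
    (hreg : ∀ x, (G.neighborSet x).ncard = r) (hS : SparseG G l) (h : List V) (B : SimpleGraph V)
    (hB : BGraph G h B) (v : V) (hv : v ∉ h) :
    ∃ w ∈ walksF G (2 * (l - 1)) v, w.toFinset.card = l ∧ Disjoint (prevZ G h) w.toFinset := by
  obtain ⟨hle, heven, hfull, hdead⟩ := hB
  set K := Finset.univ.filter (fun x => B.Reachable v x) with hK
  have memK : ∀ x, x ∈ K ↔ B.Reachable v x := by intro x; simp [hK]
  have hvK : v ∈ K := (memK v).2 (SimpleGraph.Reachable.refl v)
  set bd : V → ℕ := fun x => (Finset.univ.filter (fun y => B.Adj x y)).card with hbd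
  have hbv : 4 ≤ bd v := by
    refine hr.trans ?_
    rw [← hreg v, ← deg_card]
    exact Finset.card_le_card (fun y hy => by simp at hy ⊢; exact hfull v hv y hy)
  have hex : ∀ x ∈ K, ∃ y, B.Adj x y := by
    intro x hx
    by_cases hxv : x = v
    · subst hxv
      have : 0 < bd x := by omega
      obtain ⟨y, hy⟩ := Finset.card_pos.1 this
      exact ⟨y, by simpa using hy⟩
    · obtain ⟨p⟩ := ((memK x).1 hx).symm
      cases p with
      | nil => exact absurd rfl hxv
      | cons hadj _ => exact ⟨_, hadj⟩
  have hb2 : ∀ x ∈ K, 2 ≤ bd x := by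
    intro x hx
    obtain ⟨y, hy⟩ := hex x hx
    have h1 : 0 < bd x := Finset.card_pos.2 ⟨y, by simpa using hy⟩
    have h2 : Even (bd x) := heven x
    rw [Nat.even_iff] at h2; omega
  have hbig : l < K.card := by
    by_contra hcon
    push Not at hcon
    have h1 := hS K (Finset.card_pos.2 ⟨v, hvK⟩) hcon
    have h2 : ∀ x ∈ K, (bd x : ℝ) ≤ ∑ y ∈ K, aI G x y := by
      intro x hx
      have : (bd x : ℝ) = ∑ y ∈ K, aI B x y := by
        simp only [hbd, aI, Finset.sum_boole]
        congr 2
        ext y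
        simp only [Finset.mem_filter, Finset.mem_univ, true_and]
        exact ⟨fun hy => ⟨(memK y).2 (((memK x).1 hx).trans hy.reachable), hy⟩, fun hy => hy.2⟩
      rw [this]
      refine Finset.sum_le_sum fun y _ => ?_
      unfold aI
      by_cases hxy : B.Adj x y
      · simp [hxy, hle hxy]
      · simp only [hxy, if_false]; split_ifs <;> norm_num
    have h3 : ((∑ x ∈ K, bd x : ℕ) : ℝ) ≤ 2 * K.card := by
      push_cast; exact (Finset.sum_le_sum h2).trans h1
    have h4 : 2 * K.card + 2 ≤ ∑ x ∈ K, bd x := by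
      rw [← Finset.add_sum_erase K bd hvK]
      have : ∑ x ∈ K.erase v, 2 ≤ ∑ x ∈ K.erase v, bd x :=
        Finset.sum_le_sum fun x hx => hb2 x (Finset.mem_of_mem_erase hx)
      rw [Finset.sum_const, smul_eq_mul, Finset.card_erase_of_mem hvK] at this
      have := Finset.card_pos.2 ⟨v, hvK⟩
      omega
    have h5 : ∑ x ∈ K, bd x ≤ 2 * K.card := by exact_mod_cast h3
    omega
  obtain ⟨p, hp1, hp2⟩ := exists_closed_walk B v (l - 1) (by rw [← hK]; omega)
  refine ⟨p.support, ?_, by omega, ?_⟩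
  · rw [← hp1]; exact walk_mem G B hle p
  · rw [Finset.disjoint_right]
    intro x hx hx'
    have hxK : x ∈ K := by
      rw [memK]
      simp only [List.mem_toFinset] at hx
      exact ⟨p.takeUntil x hx⟩
    obtain ⟨y, hy⟩ := hex x hxK
    exact hdead x hx' y hy

lemma edges_card {V : Type*} [Fintype V] (G : SimpleGraph V) (r : ℕ)
    (hreg : ∀ x, (G.neighborSet x).ncard = r) (E : Finset (Sym2 V)) (hE : ∀ e ∈ E, e ∈ G.edgeSet) :
    E.card ≤ r * Fintype.card V := by
  have h1 : E ⊆ G.edgeFinset := fun e he => by simpa using hE e he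
  have h2 := Finset.card_le_card h1
  have h3 := G.sum_degrees_eq_twice_card_edges
  have h4 : ∀ x, G.degree x = r := by
    intro x
    rw [← hreg x, ← deg_card, ← SimpleGraph.card_neighborFinset_eq_degree]
    congr 1; ext; simp
  simp only [h4, Finset.sum_const, Finset.card_univ, smul_eq_mul] at h3
  nlinarith

lemma uncov_le_one {V : Type*} [Fintype V] (G : SimpleGraph V) (r : ℕ) (hr : 4 ≤ r) (hre : Even r)
    (hreg : ∀ x, (G.neighborSet x).ncard = r) (A : List V → V) (hA : ValidRule G A) (u : V) (t : ℕ) :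
    uncovProb G A u t ≤ 1 := by
  have h := Ex_Psi G r (by omega) hre hreg A hA ∅ u 0 t
  simp only [psi] at h
  refine le_trans ?_ h
  unfold uncovProb Ex
  refine Finset.sum_le_sum fun f _ => ?_
  have : Psi G r ∅ u 0 (List.ofFn f) = 1 := by simp [Psi, psi]
  rw [this, mul_one]
  split_ifs
  · exact trajProb_nonneg _ _ _ _
  · rfl

lemma uncov_bound {V : Type*} [Fintype V] [Nonempty V] (G : SimpleGraph V) (r l : ℕ) (hr : 4 ≤ r) (hre : Even r)
    (hl : 1 ≤ l) (h : ℝ) (hh : 0 ≤ h)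
    (hreg : ∀ x, (G.neighborSet x).ncard = r) (hS : SparseG G l) (hE : Expands G h)
    (A : List V → V) (hA : ValidRule G A) (u : V) (t : ℕ) (q : ℝ)
    (hq : q = 1 - h ^ 2 / (2 * (r:ℝ) ^ 2) * (l / Fintype.card V)) (hq0 : 0 < q)
    (k : ℕ) (hk : k + 1 + r * Fintype.card V ≤ t) :
    uncovProb G A u t ≤ (Fintype.card V * r ^ (2 * (l - 1))) * (q ^ k * Fintype.card V) := by
  have hr0 : (0:ℝ) < r := by exact_mod_cast (by omega : 0 < r)
  set W : V → Finset (List V) := fun v => (walksF G (2 * (l - 1)) v).filter (fun w => w.toFinset.card = l) with hW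
  have h1 : uncovProb G A u t ≤ ∑ v : V, ∑ w ∈ W v, Ex G A u t (Psi G r w.toFinset u (k + 1)) := by
    have e : ∑ v : V, ∑ w ∈ W v, Ex G A u t (Psi G r w.toFinset u (k + 1))
       = ∑ f : Fin (t + 1) → V, trajProb G A u (List.ofFn f) *
          ∑ v : V, ∑ w ∈ W v, Psi G r w.toFinset u (k + 1) (List.ofFn f) := by
      unfold Ex
      simp_rw [Finset.mul_sum]
      rw [Finset.sum_comm (s := (Finset.univ : Finset (Fin (t + 1) → V)))]
      refine Finset.sum_congr rfl fun v _ => ?_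
      rw [Finset.sum_comm]
    rw [e]
    unfold uncovProb
    refine Finset.sum_le_sum fun f _ => ?_
    have hPn : ∀ v : V, 0 ≤ ∑ w ∈ W v, Psi G r w.toFinset u (k + 1) (List.ofFn f) := fun v =>
      Finset.sum_nonneg fun w _ => Psi_nonneg G r (by omega) _ _ _ _
    split_ifs with hcov
    · exact mul_nonneg (trajProb_nonneg _ _ _ _) (Finset.sum_nonneg fun v _ => hPn v)
    · by_cases h0 : trajProb G A u (List.ofFn f) = 0
      · rw [h0, zero_mul]
      · push Not at hcov
        obtain ⟨v, hv⟩ := hcov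
        have hvn : v ∉ List.ofFn f := by
          rw [List.mem_ofFn']; rintro ⟨i, hi⟩; exact hv i hi
        have h2 : List.ofFn f = f 0 :: List.ofFn (fun i : Fin t => f i.succ) := List.ofFn_succ
        have hI : HInv G u (f 0) (List.ofFn (fun i : Fin t => f i.succ)) :=
          traj_inv G r hre hreg A hA u _ _ (by rwa [← h2])
        obtain ⟨B, hB⟩ := hI.bg
        rw [← h2] at hB
        obtain ⟨w, hw1, hw2, hw3⟩ := cover_walk G r l hr hl hreg hS _ B hB v hvn
        have hlen := hI.len
        have hec := edges_card G r hreg (trav (f 0 :: List.ofFn (fun i : Fin t => f i.succ))).toFinset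
          (fun e he => hI.sub e (by simpa using he))
        rw [List.length_ofFn, ← h2] at hlen
        rw [← h2] at hec
        have hP1 : Psi G r w.toFinset u (k + 1) (List.ofFn f) = 1 := by
          rw [Psi, if_pos hw3, show k + 1 - nred G (List.ofFn f) = 0 by omega, psi]
        have : 1 ≤ ∑ v : V, ∑ w ∈ W v, Psi G r w.toFinset u (k + 1) (List.ofFn f) := by
          calc (1:ℝ) = Psi G r w.toFinset u (k + 1) (List.ofFn f) := hP1.symm
            _ ≤ ∑ w ∈ W v, Psi G r w.toFinset u (k + 1) (List.ofFn f) :=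
              Finset.single_le_sum (f := fun w : List V => Psi G r w.toFinset u (k + 1) (List.ofFn f))
                (fun w _ => Psi_nonneg G r (by omega) _ _ _ _) (by simp [hW, hw1, hw2])
            _ ≤ _ := Finset.single_le_sum (f := fun v => ∑ w ∈ W v, Psi G r w.toFinset u (k + 1) (List.ofFn f))
                (fun v _ => hPn v) (Finset.mem_univ v)
        have hn := trajProb_nonneg G A u (List.ofFn f)
        nlinarith
  have h2 : ∀ v : V, ∀ w ∈ W v, Ex G A u t (Psi G r w.toFinset u (k + 1)) ≤ q ^ k * Fintype.card V := by
    intro v w hw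
    have hwc : w.toFinset.card = l := (Finset.mem_filter.1 hw).2
    refine (Ex_Psi G r (by omega) hre hreg A hA _ u (k + 1) t).trans ?_
    exact psi_bound G h r hh hr0 hE (reg_aI G r hreg) _ q (by rw [hwc]; exact hq) hq0 k u
  have hb0 : 0 ≤ q ^ k * Fintype.card V := by positivity
  calc _ ≤ _ := h1
    _ ≤ ∑ v : V, ∑ w ∈ W v, q ^ k * Fintype.card V :=
      Finset.sum_le_sum fun v _ => Finset.sum_le_sum fun w hw => h2 v w hw
    _ ≤ ∑ v : V, (r:ℝ) ^ (2 * (l - 1)) * (q ^ k * Fintype.card V) := by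
      refine Finset.sum_le_sum fun v _ => ?_
      rw [Finset.sum_const, nsmul_eq_mul]
      refine mul_le_mul_of_nonneg_right ?_ hb0
      have := (Finset.card_filter_le (walksF G (2 * (l - 1)) v) (fun w => w.toFinset.card = l)).trans
        (walksF_card G r hreg (2 * (l - 1)) v)
      exact_mod_cast this
    _ = _ := by rw [Finset.sum_const, Finset.card_univ, nsmul_eq_mul]; ring

lemma tsum_aux (f : ℕ → ℝ) (T : ℕ) (x : ℝ) (hx0 : 0 < x) (hx1 : x < 1) (h1 : ∀ t, f t ≤ 1)
    (h2 : ∀ t, f (t + T) ≤ (1 - x) ^ t) :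
    ∑' t, ENNReal.ofReal (f t) ≤ ENNReal.ofReal (T + 1 / x) := by
  rw [← Summable.sum_add_tsum_nat_add' (f := fun t => ENNReal.ofReal (f t)) (k := T) ENNReal.summable]
  have hq0 : 0 < 1 - x := by linarith
  have p1 : ∑ t ∈ Finset.range T, ENNReal.ofReal (f t) ≤ ENNReal.ofReal T := by
    calc _ ≤ ∑ t ∈ Finset.range T, (1 : ℝ≥0∞) := by
          refine Finset.sum_le_sum fun t _ => ?_
          rw [← ENNReal.ofReal_one]
          exact ENNReal.ofReal_le_ofReal (h1 t)
      _ = _ := by simp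
  have p2 : ∑' t, ENNReal.ofReal (f (t + T)) ≤ ENNReal.ofReal (1 / x) := by
    calc _ ≤ ∑' t : ℕ, ENNReal.ofReal ((1 - x) ^ t) :=
          ENNReal.tsum_le_tsum fun t => ENNReal.ofReal_le_ofReal (h2 t)
      _ = ENNReal.ofReal (∑' t : ℕ, (1 - x) ^ t) :=
          (ENNReal.ofReal_tsum_of_nonneg (fun t => by positivity)
            (summable_geometric_of_lt_one hq0.le (by linarith))).symm
      _ = _ := by
          rw [tsum_geometric_of_lt_one hq0.le (by linarith)]
          congr 1; rw [one_div]; congr 1; ring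
  refine (add_le_add p1 p2).trans ?_
  rw [← ENNReal.ofReal_add (by positivity) (by positivity)]

lemma num_aux (r B n l C1 t : ℕ) (hr0 : (4:ℝ) ≤ r) (hB : 1 ≤ B) (g x : ℝ)
    (hexp : (B:ℝ) ^ 4 * (r:ℝ) ^ 2 * Real.exp (-(g * C1)) ≤ 1)
    (hl : 1 ≤ l) (hn : (1:ℝ) ≤ n) (hnB : n ≤ B ^ (l + 1)) (hx : x = g * (l / n)) (hx1 : x < 1) :
    (n * (r:ℝ) ^ (2 * (l - 1))) * ((1 - x) ^ (t + C1 * n) * n) ≤ (1 - x) ^ t := by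
  have hq0 : 0 < 1 - x := by linarith
  have h2 : (1 - x) ^ (C1 * n) ≤ Real.exp (-(g * C1)) ^ l := by
    calc (1 - x) ^ (C1 * n) ≤ Real.exp (-x) ^ (C1 * n) := by
          refine pow_le_pow_left₀ hq0.le ?_ _
          have := Real.add_one_le_exp (-x); linarith
      _ = _ := by
          rw [← Real.exp_nat_mul, ← Real.exp_nat_mul]
          congr 1
          push_cast
          rw [hx]
          have : (n:ℝ) ≠ 0 := by linarith
          field_simp
  have h3 : (n:ℝ) ≤ ((B:ℝ) ^ 2) ^ l := by
    have : n ≤ (B ^ 2) ^ l := by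
      rw [← pow_mul]
      exact hnB.trans (Nat.pow_le_pow_right hB (by omega))
    exact_mod_cast this
  have h4 : (r:ℝ) ^ (2 * (l - 1)) ≤ ((r:ℝ) ^ 2) ^ l := by
    rw [← pow_mul]; apply pow_le_pow_right₀ (by linarith); omega
  have h5 : (n * (r:ℝ) ^ (2 * (l - 1))) * n * (1 - x) ^ (C1 * n) ≤ 1 := by
    calc (n * (r:ℝ) ^ (2 * (l - 1))) * n * (1 - x) ^ (C1 * n)
        ≤ (((B:ℝ) ^ 2) ^ l * ((r:ℝ) ^ 2) ^ l) * ((B:ℝ) ^ 2) ^ l * Real.exp (-(g * C1)) ^ l := by gcongr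
      _ = ((B:ℝ) ^ 4 * (r:ℝ) ^ 2 * Real.exp (-(g * C1))) ^ l := by
          rw [← mul_pow, ← mul_pow, ← mul_pow]; congr 1; ring
      _ ≤ 1 := pow_le_one₀ (by positivity) hexp
  calc (n * (r:ℝ) ^ (2 * (l - 1))) * ((1 - x) ^ (t + C1 * n) * n)
      = ((n * (r:ℝ) ^ (2 * (l - 1))) * n * (1 - x) ^ (C1 * n)) * (1 - x) ^ t := by rw [pow_add]; ring
    _ ≤ 1 * (1 - x) ^ t := by gcongr
    _ = (1 - x) ^ t := one_mul _

theorem det_cover (r B : ℕ) (hr : 4 ≤ r) (hre : Even r) (hB : 1 ≤ B) (h : ℝ) (hh : 0 < h) (hh1 : h ≤ 1) :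
    ∃ C : ℝ, 0 < C ∧ ∀ n l : ℕ, 1 ≤ l → l ≤ n → n ≤ B ^ (l + 1) →
      ∀ (V : Type) [Fintype V] (G : SimpleGraph V), Fintype.card V = n →
        (∀ x, (G.neighborSet x).ncard = r) → SparseG G l → Expands G h →
        ∀ A : List V → V, ValidRule G A → ∀ u : V, ecoverTime G A u ≤ ENNReal.ofReal (C * (n : ℝ)) := by
  have hr0 : (4:ℝ) ≤ r := by exact_mod_cast hr
  obtain ⟨g, hg⟩ : ∃ g : ℝ, g = h ^ 2 / (2 * (r:ℝ) ^ 2) := ⟨_, rfl⟩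
  have hg0 : 0 < g := by rw [hg]; positivity
  have hg1 : g < 1 := by
    rw [hg, div_lt_one (by positivity)]; nlinarith
  obtain ⟨C1, hC1⟩ := exists_nat_ge (Real.log ((B:ℝ) ^ 4 * (r:ℝ) ^ 2) / g)
  have hBr : (0:ℝ) < (B:ℝ) ^ 4 * (r:ℝ) ^ 2 := by
    have : (1:ℝ) ≤ B := by exact_mod_cast hB
    positivity
  have hexp : (B:ℝ) ^ 4 * (r:ℝ) ^ 2 * Real.exp (-(g * C1)) ≤ 1 := by
    rw [div_le_iff₀ hg0] at hC1
    have : (B:ℝ) ^ 4 * (r:ℝ) ^ 2 ≤ Real.exp (g * C1) := by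
      rw [← Real.log_le_iff_le_exp hBr]; linarith
    rw [Real.exp_neg]
    rw [← div_eq_mul_inv, div_le_one (Real.exp_pos _)]; exact this
  refine ⟨r + 1 + C1 + 1 / g, by positivity, ?_⟩
  intro n l hl hln hnB V _ G hcard hreg hS hE A hA u
  have hn1 : 1 ≤ n := hl.trans hln
  have hn : (1:ℝ) ≤ n := by exact_mod_cast hn1
  have : Nonempty V := ⟨u⟩
  have hl1 : (1:ℝ) ≤ l := by exact_mod_cast hl
  have hlnR : (l:ℝ) ≤ n := by exact_mod_cast hln
  obtain ⟨x, hx⟩ : ∃ x : ℝ, x = g * (l / n) := ⟨_, rfl⟩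
  have hx0 : 0 < x := by rw [hx]; positivity
  have hx1 : x < 1 := by
    have : (l:ℝ) / n ≤ 1 := by rw [div_le_one (by linarith)]; exact hlnR
    calc x ≤ g * 1 := by rw [hx]; gcongr
      _ < 1 := by linarith
  obtain ⟨T0, hT0⟩ : ∃ T0 : ℕ, T0 = C1 * n + 1 + r * n := ⟨_, rfl⟩
  have hbound : ∀ t, uncovProb G A u (t + T0) ≤ (1 - x) ^ t := by
    intro t
    have h1 := uncov_bound G r l hr hre hl h hh.le hreg hS hE A hA u (t + T0) (1 - x)
      (by rw [hx, hcard, hg]) (by linarith) (t + C1 * n) (by rw [hcard]; omega)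
    rw [hcard] at h1
    exact h1.trans (num_aux r B n l C1 t hr0 hB g x hexp hl hn hnB hx hx1)
  unfold ecoverTime
  refine (tsum_aux _ T0 x hx0 hx1 (uncov_le_one G r hr hre hreg A hA u) hbound).trans ?_
  apply ENNReal.ofReal_le_ofReal
  have e1 : 1 / x ≤ 1 / g * n := by
    rw [div_le_iff₀ hx0, hx]
    have : 1 / g * n * (g * (l / n)) = l := by field_simp
    rw [this]; exact hl1
  rw [hT0]; push_cast
  have e2 : (r + 1 + C1 + 1 / g) * (n:ℝ) = r * n + n + C1 * n + 1 / g * n := by ring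
  rw [e2]; linarith

noncomputable def swG {V : Type*} (G : SimpleGraph V) (x y z w : V) : SimpleGraph V :=
  SimpleGraph.fromEdgeSet ((G.edgeSet \ {s(x, y), s(z, w)}) ∪ {s(x, z), s(y, w)})

noncomputable def sI {V : Type*} (p q a b : V) : ℝ := if s(p, q) = s(a, b) then 1 else 0

lemma sI_eq {V : Type*} (p q a b : V) (hab : a ≠ b) :
    sI p q a b = (if p = a then 1 else 0) * (if q = b then 1 else 0)
      + (if p = b then 1 else 0) * (if q = a then 1 else 0) := by
  unfold sI
  simp only [Sym2.eq_iff]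
  by_cases h1 : p = a <;> by_cases h2 : q = b <;> by_cases h3 : p = b <;> by_cases h4 : q = a <;>
    simp_all

lemma sI_sum {V : Type*} (P Q : Finset V) (a b : V) (hab : a ≠ b) :
    ∑ p ∈ P, ∑ q ∈ Q, sI p q a b = (if a ∈ P then 1 else 0) * (if b ∈ Q then 1 else 0)
      + (if b ∈ P then 1 else 0) * (if a ∈ Q then 1 else 0) := by
  simp_rw [sI_eq _ _ a b hab, Finset.sum_add_distrib, ← Finset.mul_sum, ← Finset.sum_mul]
  simp

lemma swG_edge {V : Type*} (G : SimpleGraph V) (x y z w : V) (hxz : x ≠ z) (hyw : y ≠ w) :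
    (swG G x y z w).edgeSet = (G.edgeSet \ {s(x, y), s(z, w)}) ∪ {s(x, z), s(y, w)} := by
  unfold swG
  rw [SimpleGraph.edgeSet_fromEdgeSet]
  ext e
  simp only [Set.mem_sdiff, Set.mem_union, Set.mem_insert_iff, Set.mem_singleton_iff]
  constructor
  · exact fun h => h.1
  · intro h
    refine ⟨h, ?_⟩
    rcases h with h | h | h
    · exact G.not_isDiag_of_mem_edgeSet h.1
    · rw [h]; simpa using hxz
    · rw [h]; simpa using hyw

lemma sw_ind {S : Type*} (E : Set S) (e1 e2 e3 e4 : S) (h1 : e1 ∉ E) (h2 : e2 ∉ E) (h3 : e3 ∈ E)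
    (h4 : e4 ∈ E) (d1 : e1 ≠ e2) (d2 : e3 ≠ e4) (e : S) :
    (if (e ∈ E ∧ e ≠ e3 ∧ e ≠ e4) ∨ e = e1 ∨ e = e2 then (1:ℝ) else 0) =
      (if e ∈ E then 1 else 0) + (if e = e1 then 1 else 0) + (if e = e2 then 1 else 0)
        - (if e = e3 then 1 else 0) - (if e = e4 then 1 else 0) := by
  have d3 : e1 ≠ e3 := fun h => h1 (h ▸ h3)
  have d4 : e1 ≠ e4 := fun h => h1 (h ▸ h4)
  have d5 : e2 ≠ e3 := fun h => h2 (h ▸ h3)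
  have d6 : e2 ≠ e4 := fun h => h2 (h ▸ h4)
  by_cases c1 : e = e1
  · subst c1; simp_all
  by_cases c2 : e = e2
  · subst c2; simp_all
  by_cases c3 : e = e3
  · subst c3; simp_all
  by_cases c4 : e = e4
  · subst c4; simp_all
  simp_all

lemma aI_swG {V : Type*} (G : SimpleGraph V) (x y z w : V)
    (hxy : G.Adj x y) (hzw : G.Adj z w) (hxz : ¬ G.Adj x z) (hyw : ¬ G.Adj y w)
    (n1 : x ≠ z) (n2 : y ≠ w) (n3 : x ≠ w) (p q : V) :
    aI (swG G x y z w) p q = aI G p q + sI p q x z + sI p q y w - sI p q x y - sI p q z w := by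
  unfold aI sI
  have he := swG_edge G x y z w n1 n2
  have h1 : (swG G x y z w).Adj p q ↔
      ((s(p,q) ∈ G.edgeSet ∧ s(p,q) ≠ s(x,y) ∧ s(p,q) ≠ s(z,w)) ∨ s(p,q) = s(x,z) ∨ s(p,q) = s(y,w)) := by
    rw [← SimpleGraph.mem_edgeSet, he]
    simp only [Set.mem_sdiff, Set.mem_union, Set.mem_insert_iff, Set.mem_singleton_iff, not_or]
  have h2 : G.Adj p q ↔ s(p,q) ∈ G.edgeSet := Iff.rfl
  rw [← SimpleGraph.mem_edgeSet] at hxy hzw hxz hyw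
  have n4 : x ≠ y := G.ne_of_adj hxy
  have d1 : s(x,z) ≠ s(y,w) := by
    intro h; rw [Sym2.eq_iff] at h; rcases h with h | h
    · exact n4 h.1
    · exact n3 h.1
  have d2 : s(x,y) ≠ s(z,w) := by
    intro h; rw [Sym2.eq_iff] at h; rcases h with h | h
    · exact n1 h.1
    · exact n3 h.1
  simp only [h1, h2]
  convert sw_ind G.edgeSet _ _ _ _ hxz hyw hxy hzw d1 d2 s(p, q)

lemma swG_inj {V : Type*} (G G' : SimpleGraph V) (x y z w : V)
    (hxy : G.Adj x y) (hzw : G.Adj z w) (hxz : ¬ G.Adj x z) (hyw : ¬ G.Adj y w)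
    (hxy' : G'.Adj x y) (hzw' : G'.Adj z w) (hxz' : ¬ G'.Adj x z) (hyw' : ¬ G'.Adj y w)
    (n1 : x ≠ z) (n2 : y ≠ w) (h : swG G x y z w = swG G' x y z w) : G = G' := by
  apply SimpleGraph.edgeSet_injective
  have h1 := swG_edge G x y z w n1 n2
  have h2 := swG_edge G' x y z w n1 n2
  rw [h, h2] at h1
  rw [← SimpleGraph.mem_edgeSet] at hxy hzw hxz hyw hxy' hzw' hxz' hyw'
  ext e
  have h3 := Set.ext_iff.1 h1 e
  simp only [Set.mem_sdiff, Set.mem_union, Set.mem_insert_iff, Set.mem_singleton_iff] at h3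
  by_cases e1 : e = s(x,z)
  · subst e1; simp_all
  by_cases e2 : e = s(y,w)
  · subst e2; simp_all
  by_cases e3 : e = s(x,y)
  · subst e3; simp_all
  by_cases e4 : e = s(z,w)
  · subst e4; simp_all
  simp_all

lemma reg_of_aI {V : Type*} [Fintype V] (G : SimpleGraph V) (r : ℕ) (x : V)
    (h : ∑ y, aI G x y = r) : (G.neighborSet x).ncard = r := by
  rw [← deg_card]
  unfold aI at h
  rw [Finset.sum_boole] at h
  exact_mod_cast h

noncomputable def crossE {V : Type*} [Fintype V] (G : SimpleGraph V) (U : Finset V) : ℝ :=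
  ∑ x ∈ U, ∑ y ∈ Uᶜ, aI G x y

noncomputable def regF (V : Type*) [Fintype V] (r : ℕ) : Finset (SimpleGraph V) :=
  Set.Finite.toFinset (Set.toFinite {G : SimpleGraph V | ∀ x, (G.neighborSet x).ncard = r})

lemma mem_regF (V : Type*) [Fintype V] (r : ℕ) (G : SimpleGraph V) :
    G ∈ regF V r ↔ ∀ x, (G.neighborSet x).ncard = r := by
  simp [regF]

noncomputable def MF {V : Type*} [Fintype V] (r : ℕ) (U : Finset V) (b : ℕ) : Finset (SimpleGraph V) :=
  (regF V r).filter (fun G => crossE G U = b)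

lemma swG_mem {V : Type*} [Fintype V] (G : SimpleGraph V) (r : ℕ) (U : Finset V) (b : ℕ)
    (hG : G ∈ MF r U b) (x y z w : V) (hx : x ∈ U) (hy : y ∈ U) (hz : z ∉ U) (hw : w ∉ U)
    (hxy : G.Adj x y) (hzw : G.Adj z w) (hxz : ¬ G.Adj x z) (hyw : ¬ G.Adj y w) :
    swG G x y z w ∈ MF r U (b + 2) := by
  have n1 : x ≠ z := fun h => hz (h ▸ hx)
  have n2 : y ≠ w := fun h => hw (h ▸ hy)
  have n3 : x ≠ w := fun h => hw (h ▸ hx)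
  have n4 : x ≠ y := G.ne_of_adj hxy
  have n5 : z ≠ w := G.ne_of_adj hzw
  have ha := aI_swG G x y z w hxy hzw hxz hyw n1 n2 n3
  rw [MF, Finset.mem_filter, mem_regF] at hG ⊢
  constructor
  · intro p
    apply reg_of_aI
    have hp := reg_aI G r hG.1 p
    have hs : ∀ a b : V, a ≠ b → ∑ q, sI p q a b = (if p = a then 1 else 0) + (if p = b then 1 else 0) := by
      intro a b hab
      simp_rw [sI_eq p _ a b hab, Finset.sum_add_distrib, ← Finset.mul_sum]
      simp
    simp_rw [ha, Finset.sum_sub_distrib, Finset.sum_add_distrib]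
    rw [hs _ _ n1, hs _ _ n2, hs _ _ n4, hs _ _ n5, hp]
    ring
  · have hc := hG.2
    unfold crossE at hc ⊢
    simp_rw [ha, Finset.sum_sub_distrib, Finset.sum_add_distrib]
    rw [sI_sum _ _ _ _ n1, sI_sum _ _ _ _ n2, sI_sum _ _ _ _ n4, sI_sum _ _ _ _ n5, hc]
    simp [hx, hy, hz, hw]
    ring

noncomputable def quads {V : Type*} [Fintype V] (G : SimpleGraph V) (U : Finset V) : Finset ((V × V) × (V × V)) :=
  ((U ×ˢ U) ×ˢ (Uᶜ ×ˢ Uᶜ)).filter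
    (fun q => G.Adj q.1.1 q.1.2 ∧ G.Adj q.2.1 q.2.2 ∧ ¬ G.Adj q.1.1 q.2.1 ∧ ¬ G.Adj q.1.2 q.2.2)

lemma aI_inner_sum {V : Type*} [Fintype V] (G : SimpleGraph V) (r : ℕ)
    (hreg : ∀ x, (G.neighborSet x).ncard = r) (U W : Finset V) (h : W = Uᶜ) :
    ∑ x ∈ U, ∑ y ∈ U, aI G x y = r * U.card - ∑ x ∈ U, ∑ y ∈ W, aI G x y := by
  subst h
  rw [eq_sub_iff_add_eq, ← Finset.sum_add_distrib]
  have : ∀ x ∈ U, (∑ y ∈ U, aI G x y + ∑ y ∈ Uᶜ, aI G x y) = r := fun x _ => by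
    rw [Finset.sum_add_sum_compl, reg_aI G r hreg]
  rw [Finset.sum_congr rfl this, Finset.sum_const, nsmul_eq_mul]; ring

lemma cross_compl {V : Type*} [Fintype V] (G : SimpleGraph V) (U : Finset V) :
    ∑ x ∈ Uᶜ, ∑ y ∈ U, aI G x y = crossE G U := by
  unfold crossE
  rw [Finset.sum_comm]
  simp_rw [aI_comm G]

lemma quads_card {V : Type*} [Fintype V] (G : SimpleGraph V) (r : ℕ)
    (hreg : ∀ x, (G.neighborSet x).ncard = r) (U : Finset V) :
    (r * U.card - crossE G U) * (r * (Uᶜ).card - crossE G U) - 2 * crossE G U * r ^ 2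
      ≤ ((quads G U).card : ℝ) := by
  have hle : ∀ (S : Finset V) (x : V), ∑ y ∈ S, aI G x y ≤ r := fun S x => by
    rw [← reg_aI G r hreg x]
    exact Finset.sum_le_sum_of_subset_of_nonneg (Finset.subset_univ _) fun _ _ _ => aI_nonneg _ _ _
  have hnn : ∀ (S : Finset V) (x : V), 0 ≤ ∑ y ∈ S, aI G x y := fun S x =>
    Finset.sum_nonneg fun _ _ => aI_nonneg _ _ _
  have h0 : ((quads G U).card : ℝ) = ∑ x ∈ U, ∑ y ∈ U, ∑ z ∈ Uᶜ, ∑ w ∈ Uᶜ,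
      (if G.Adj x y ∧ G.Adj z w ∧ ¬ G.Adj x z ∧ ¬ G.Adj y w then (1:ℝ) else 0) := by
    unfold quads
    rw [Finset.card_filter]
    push_cast
    simp_rw [Finset.sum_product]
  have h1 : ∀ x y z w : V, aI G x y * aI G z w - aI G x z * (aI G x y * aI G z w) - aI G y w * (aI G x y * aI G z w)
      ≤ (if G.Adj x y ∧ G.Adj z w ∧ ¬ G.Adj x z ∧ ¬ G.Adj y w then (1:ℝ) else 0) := by
    intro x y z w
    unfold aI
    by_cases a1 : G.Adj x y <;> by_cases a2 : G.Adj z w <;> by_cases a3 : G.Adj x z <;>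
      by_cases a4 : G.Adj y w <;> simp [a1, a2, a3, a4]
  have e0 : ∑ x ∈ U, ∑ y ∈ U, ∑ z ∈ Uᶜ, ∑ w ∈ Uᶜ, aI G x y * aI G z w
      = (r * U.card - crossE G U) * (r * (Uᶜ).card - crossE G U) := by
    have i1 := aI_inner_sum G r hreg U Uᶜ rfl
    have i2 := aI_inner_sum G r hreg Uᶜ U (by simp)
    rw [cross_compl] at i2
    rw [crossE, ← i1, ← crossE, ← i2]
    simp_rw [Finset.sum_mul, Finset.mul_sum]
  have e1 : ∑ x ∈ U, ∑ y ∈ U, ∑ z ∈ Uᶜ, ∑ w ∈ Uᶜ, aI G x z * (aI G x y * aI G z w) ≤ crossE G U * r ^ 2 := by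
    have : ∑ x ∈ U, ∑ y ∈ U, ∑ z ∈ Uᶜ, ∑ w ∈ Uᶜ, aI G x z * (aI G x y * aI G z w)
       = ∑ x ∈ U, ∑ z ∈ Uᶜ, aI G x z * ((∑ y ∈ U, aI G x y) * ∑ w ∈ Uᶜ, aI G z w) := by
      refine Finset.sum_congr rfl fun x _ => ?_
      rw [Finset.sum_comm]
      refine Finset.sum_congr rfl fun z _ => ?_
      simp_rw [Finset.sum_mul, Finset.mul_sum]
    rw [this, crossE, Finset.sum_mul]
    refine Finset.sum_le_sum fun x _ => ?_
    rw [Finset.sum_mul]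
    refine Finset.sum_le_sum fun z _ => ?_
    rw [sq]
    exact mul_le_mul_of_nonneg_left (mul_le_mul (hle _ _) (hle _ _) (hnn _ _) (by positivity)) (aI_nonneg _ _ _)
  have e2 : ∑ x ∈ U, ∑ y ∈ U, ∑ z ∈ Uᶜ, ∑ w ∈ Uᶜ, aI G y w * (aI G x y * aI G z w) ≤ crossE G U * r ^ 2 := by
    have : ∑ x ∈ U, ∑ y ∈ U, ∑ z ∈ Uᶜ, ∑ w ∈ Uᶜ, aI G y w * (aI G x y * aI G z w)
       = ∑ y ∈ U, ∑ w ∈ Uᶜ, aI G y w * ((∑ x ∈ U, aI G y x) * ∑ z ∈ Uᶜ, aI G w z) := by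
      rw [Finset.sum_comm]
      refine Finset.sum_congr rfl fun y _ => ?_
      rw [Finset.sum_congr rfl (fun x _ => Finset.sum_comm), Finset.sum_comm]
      refine Finset.sum_congr rfl fun w _ => ?_
      simp_rw [Finset.sum_mul, Finset.mul_sum]
      refine Finset.sum_congr rfl fun x _ => ?_
      refine Finset.sum_congr rfl fun z _ => ?_
      rw [aI_comm G x y, aI_comm G w z]
    rw [this, crossE, Finset.sum_mul]
    refine Finset.sum_le_sum fun x _ => ?_
    rw [Finset.sum_mul]
    refine Finset.sum_le_sum fun z _ => ?_
    rw [sq]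
    exact mul_le_mul_of_nonneg_left (mul_le_mul (hle _ _) (hle _ _) (hnn _ _) (by positivity)) (aI_nonneg _ _ _)
  have h2 : ∑ x ∈ U, ∑ y ∈ U, ∑ z ∈ Uᶜ, ∑ w ∈ Uᶜ, (aI G x y * aI G z w - aI G x z * (aI G x y * aI G z w) - aI G y w * (aI G x y * aI G z w)) ≤ ((quads G U).card : ℝ) := by
    rw [h0]
    exact Finset.sum_le_sum fun x _ => Finset.sum_le_sum fun y _ => Finset.sum_le_sum fun z _ =>
      Finset.sum_le_sum fun w _ => h1 x y z w
  simp_rw [Finset.sum_sub_distrib] at h2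
  linarith

lemma switch {V : Type*} [Fintype V] (r : ℕ) (U : Finset V) (b : ℕ) :
    ((MF r U b).card : ℝ) * ((r * U.card - b) * (r * (Uᶜ).card - b) - 2 * b * r ^ 2)
      ≤ ((MF r U (b + 2)).card : ℝ) * (b + 2) ^ 2 := by
  set S : Finset (SimpleGraph V × ((V × V) × (V × V))) :=
    (MF r U b).biUnion (fun G => (quads G U).image (fun q => (G, q))) with hS
  set T : Finset (SimpleGraph V × ((V × V) × (V × V))) :=
    (MF r U (b+2)).biUnion (fun G => (((U ×ˢ U) ×ˢ (Uᶜ ×ˢ Uᶜ)).filter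
      (fun q => G.Adj q.1.1 q.2.1 ∧ G.Adj q.1.2 q.2.2)).image (fun q => (G, q))) with hT
  have hSc : (S.card : ℝ) = ∑ G ∈ MF r U b, ((quads G U).card : ℝ) := by
    rw [hS, Finset.card_biUnion]
    · push_cast
      refine Finset.sum_congr rfl fun G _ => ?_
      rw [Finset.card_image_of_injective]
      intro a b h; simpa using h
    · intro G _ G' _ hne
      rw [Function.onFun, Finset.disjoint_left]
      intro p hp hp'
      simp only [Finset.mem_image] at hp hp'
      obtain ⟨q, _, rfl⟩ := hp
      obtain ⟨q', _, h⟩ := hp'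
      exact hne (by simpa using (congrArg Prod.fst h).symm)
  have hTc : (T.card : ℝ) ≤ ∑ G ∈ MF r U (b+2), ((b:ℝ) + 2) ^ 2 := by
    refine le_trans (Nat.cast_le.2 Finset.card_biUnion_le) ?_
    push_cast
    refine Finset.sum_le_sum fun G hG => ?_
    refine le_trans (Nat.cast_le.2 Finset.card_image_le) ?_
    have hb : crossE G U = b + 2 := by
      have := (Finset.mem_filter.1 hG).2; push_cast at this; exact this
    rw [Finset.card_filter]
    push_cast
    simp_rw [Finset.sum_product]
    rw [← hb, sq]
    unfold crossE
    rw [Finset.sum_mul_sum]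
    refine le_of_eq ?_
    refine Finset.sum_congr rfl fun x _ => ?_
    refine Finset.sum_congr rfl fun y _ => ?_
    rw [Finset.sum_mul_sum]
    refine Finset.sum_congr rfl fun z _ => ?_
    refine Finset.sum_congr rfl fun w _ => ?_
    unfold aI
    by_cases a1 : G.Adj x z <;> by_cases a2 : G.Adj y w <;> simp [a1, a2]
  have hST : S.card ≤ T.card := by
    refine Finset.card_le_card_of_injOn (fun p => (swG p.1 p.2.1.1 p.2.1.2 p.2.2.1 p.2.2.2, p.2)) ?_ ?_
    · rintro ⟨G, ⟨⟨x, y⟩, ⟨z, w⟩⟩⟩ hp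
      simp only [hS, quads, Finset.coe_biUnion, Set.mem_iUnion, Finset.mem_coe, Finset.mem_image,
        Finset.mem_filter, Finset.mem_product, Finset.mem_compl] at hp
      obtain ⟨G1, hG1, q, ⟨⟨⟨hx, hy⟩, hz, hw⟩, a1, a2, a3, a4⟩, h⟩ := hp
      obtain ⟨rfl, rfl⟩ := Prod.mk.inj h
      simp only at hx hy hz hw a1 a2 a3 a4
      have n1 : x ≠ z := fun h => hz (h ▸ hx)
      have n2 : y ≠ w := fun h => hw (h ▸ hy)
      simp only [hT, Finset.coe_biUnion, Set.mem_iUnion, Finset.mem_coe, Finset.mem_image,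
        Finset.mem_filter, Finset.mem_product, Finset.mem_compl]
      refine ⟨_, swG_mem G1 r U b hG1 x y z w hx hy hz hw a1 a2 a3 a4, _, ⟨⟨⟨hx, hy⟩, hz, hw⟩, ?_, ?_⟩, rfl⟩
      · rw [← SimpleGraph.mem_edgeSet, swG_edge _ _ _ _ _ n1 n2]; simp
      · rw [← SimpleGraph.mem_edgeSet, swG_edge _ _ _ _ _ n1 n2]; simp
    · rintro ⟨G, ⟨⟨x, y⟩, ⟨z, w⟩⟩⟩ hp ⟨G', q'⟩ hp' heq
      obtain ⟨h1, h2⟩ := Prod.mk.inj heq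
      simp only at h1 h2
      subst h2
      simp only [hS, quads, Finset.coe_biUnion, Set.mem_iUnion, Finset.mem_coe, Finset.mem_image,
        Finset.mem_filter, Finset.mem_product, Finset.mem_compl] at hp hp'
      obtain ⟨G1, hG1, q, ⟨⟨⟨hx, hy⟩, hz, hw⟩, a1, a2, a3, a4⟩, h⟩ := hp
      obtain ⟨rfl, rfl⟩ := Prod.mk.inj h
      obtain ⟨G2, hG2, q, ⟨⟨⟨hx', hy'⟩, hz', hw'⟩, a1', a2', a3', a4'⟩, h'⟩ := hp'
      obtain ⟨rfl, rfl⟩ := Prod.mk.inj h'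
      simp only at hx hy hz hw a1 a2 a3 a4 a1' a2' a3' a4'
      have n1 : x ≠ z := fun h => hz (h ▸ hx)
      have n2 : y ≠ w := fun h => hw (h ▸ hy)
      rw [swG_inj G1 G2 x y z w a1 a2 a3 a4 a1' a2' a3' a4' n1 n2 h1]
  have hlow : ((MF r U b).card : ℝ) * ((r * U.card - b) * (r * (Uᶜ).card - b) - 2 * b * r ^ 2) ≤ S.card := by
    rw [hSc, ← nsmul_eq_mul, ← Finset.sum_const]
    refine Finset.sum_le_sum fun G hG => ?_
    have h1 := Finset.mem_filter.1 hG
    have := quads_card G r ((mem_regF V r G).1 h1.1) U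
    rw [h1.2] at this
    exact this
  refine hlow.trans ((Nat.cast_le.2 hST).trans (hTc.trans ?_))
  rw [Finset.sum_const, nsmul_eq_mul]

lemma choose_rec (m j : ℕ) : ((m.choose (j + 1) : ℕ) : ℝ) * (j + 1) = (m.choose j : ℝ) * ((m:ℝ) - j) := by
  rcases le_or_gt j m with h | h
  · have := Nat.choose_succ_right_eq m j
    rw [← Nat.cast_sub h]
    exact_mod_cast this
  · rw [Nat.choose_eq_zero_of_lt h, Nat.choose_eq_zero_of_lt (by omega)]; simp

lemma choose_exp_bound (m k : ℕ) : (m.choose k : ℝ) ≤ (101/100) ^ m * 100 ^ k := by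
  rcases le_or_gt k m with h | h
  · have h1 : ((1/100 : ℝ) + 1) ^ m = ∑ i ∈ Finset.range (m + 1), (1/100:ℝ) ^ i * 1 ^ (m - i) * (m.choose i) :=
      add_pow _ _ _
    have h2 : (1/100:ℝ) ^ k * 1 ^ (m - k) * (m.choose k) ≤ ((1/100 : ℝ) + 1) ^ m := by
      rw [h1]
      exact Finset.single_le_sum (f := fun i => (1/100:ℝ) ^ i * 1 ^ (m - i) * (m.choose i))
        (fun i _ => by positivity) (Finset.mem_range.2 (by omega))
    rw [one_pow, mul_one, one_div, inv_pow] at h2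
    have h3 : (0:ℝ) < 100 ^ k := by positivity
    rw [inv_mul_le_iff₀ h3] at h2
    calc (m.choose k : ℝ) ≤ _ := h2
      _ = _ := by norm_num; ring
  · rw [Nat.choose_eq_zero_of_lt h]; simp; positivity

lemma two_pow_le_choose (u m : ℕ) (h : m ≤ u) : 2 ^ m ≤ (2 * u).choose m := by
  calc 2 ^ m = ∑ i ∈ Finset.range (m + 1), m.choose i := (Nat.sum_range_choose m).symm
    _ ≤ ∑ i ∈ Finset.range (m + 1), (m.choose i) ^ 2 := Finset.sum_le_sum fun i _ => by
        nlinarith [Nat.zero_le (m.choose i), Nat.le_self_pow (n := 2) (by norm_num) (m.choose i)]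
    _ = (2 * m).choose m := Nat.sum_range_choose_sq m
    _ ≤ (2 * u).choose m := Nat.choose_le_choose _ (by omega)

lemma choose_shift (N u j : ℕ) (hN : 4 * u + 3 * j ≤ 3 * N) :
    (N.choose j : ℝ) ≤ 4 ^ j * ((N - u).choose j : ℝ) := by
  have huN : u ≤ N := by omega
  induction j with
  | zero => simp
  | succ j ih =>
    have ih := ih (by omega)
    have h1 := choose_rec N j
    have h2 := choose_rec (N - u) j
    rw [Nat.cast_sub huN] at h2
    have hN' : (4 * u + 3 * (j+1) : ℝ) ≤ 3 * N := by exact_mod_cast hN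
    have hj : (0:ℝ) < j + 1 := by positivity
    rw [← mul_le_mul_iff_left₀ hj, h1, mul_assoc, h2]
    have hu0 : (0:ℝ) ≤ u := by positivity
    have hj0 : (0:ℝ) ≤ j := by positivity
    calc (N.choose j : ℝ) * (N - j) ≤ (4 ^ j * ((N - u).choose j : ℝ)) * (4 * (N - u - j)) := by
          apply mul_le_mul ih (by linarith) (by linarith) (by positivity)
      _ = _ := by ring

noncomputable def wgt (u N j : ℕ) : ℝ := ((2 * u).choose j : ℝ) * (N.choose j : ℝ)

lemma wgt_succ (u N j : ℕ) : wgt u N (j + 1) * ((j:ℝ) + 1) ^ 2 = wgt u N j * ((2 * u - j) * (N - j)) := by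
  unfold wgt
  have h1 := choose_rec (2 * u) j
  have h2 := choose_rec N j
  push_cast at h1
  calc _ = (((2 * u).choose (j+1) : ℝ) * (j + 1)) * ((N.choose (j+1) : ℝ) * (j + 1)) := by ring
    _ = _ := by rw [h1, h2]; ring

lemma b1_chain (n u j0 N : ℕ) (hN : N = 2 * (n - u)) (F : ℕ → ℝ) (hF0 : ∀ j, 0 ≤ F j) (hu : 2 * u ≤ n)
    (h100 : 100 * j0 < u) (hn : 4032 ≤ n)
    (hrec : ∀ j : ℕ, j ≤ u + j0 → F j * ((2 * u - j) * (N - j) - 16 * j) ≤ F (j + 1) * ((j:ℝ) + 1) ^ 2)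
    (k : ℕ) (hk : k ≤ u + 1) :
    F j0 * wgt u N (j0 + k) ≤ (21/20) ^ k * F (j0 + k) * wgt u N j0 := by
  induction k with
  | zero => simp
  | succ k ih =>
    have ih := ih (by omega)
    obtain ⟨j, hj⟩ : ∃ j, j = j0 + k := ⟨_, rfl⟩
    have hju : j ≤ u + j0 := by omega
    have hr := hrec j hju
    rw [← add_assoc, ← hj]
    rw [← hj] at ih
    have hN' : (N:ℝ) = 2 * (n - u) := by
      rw [hN]; push_cast [Nat.cast_sub (show u ≤ n by omega)]; ring
    have a1 : (3 * j : ℝ) / 4 * 2 ≤ 3 * u - 0 := by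
      have : 2 * j ≤ 4 * u := by omega
      have : 3 * j ≤ 6 * u := by omega
      have h' : (3 * j : ℝ) ≤ 6 * u := by exact_mod_cast this
      linarith
    have a2 : (2 * j : ℝ) ≤ 3 * u := by
      have : 2 * j ≤ 3 * u := by omega
      exact_mod_cast this
    have a3 : (2 * u : ℝ) ≤ n := by exact_mod_cast hu
    have a4 : (4032 : ℝ) ≤ n := by exact_mod_cast hn
    have j0' : (0:ℝ) ≤ j := by positivity
    have b1 : (j:ℝ) / 3 ≤ 2 * u - j := by linarith
    have b2 : (n:ℝ) / 4 ≤ N - j := by rw [hN']; linarith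
    have b3 : (j:ℝ) / 3 * (n / 4) ≤ (2 * u - j) * (N - j) :=
      mul_le_mul b1 b2 (by positivity) (by linarith)
    have b4 : 336 * (j:ℝ) ≤ (2 * u - j) * (N - j) := by nlinarith
    have X0 : (0:ℝ) ≤ (2 * u - j) * (N - j) := by linarith
    have c1 : F j * ((2 * u - j) * (N - j)) ≤ 21/20 * (F (j + 1) * ((j:ℝ) + 1) ^ 2) := by
      have : F j * (20 / 21 * ((2 * u - j) * (N - j))) ≤ F j * ((2 * u - j) * (N - j) - 16 * j) :=
        mul_le_mul_of_nonneg_left (by linarith) (hF0 j)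
      linarith
    have hp : (0:ℝ) < ((j:ℝ) + 1) ^ 2 := by positivity
    rw [← mul_le_mul_iff_left₀ hp, mul_assoc, wgt_succ]
    have w0 : 0 ≤ wgt u N j0 := by unfold wgt; positivity
    calc F j0 * (wgt u N j * ((2 * u - j) * (N - j))) = (F j0 * wgt u N j) * ((2 * u - j) * (N - j)) := by ring
      _ ≤ ((21/20) ^ k * F j * wgt u N j0) * ((2 * u - j) * (N - j)) := mul_le_mul_of_nonneg_right ih X0
      _ = ((21/20) ^ k * wgt u N j0) * (F j * ((2 * u - j) * (N - j))) := by ring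
      _ ≤ ((21/20) ^ k * wgt u N j0) * (21/20 * (F (j + 1) * ((j:ℝ) + 1) ^ 2)) :=
          mul_le_mul_of_nonneg_left c1 (by positivity)
      _ = _ := by ring

lemma b1_num (n u j0 N : ℕ) (hN : N = 2 * (n - u)) (hu : 2 * u ≤ n)
    (h100 : 100 * j0 < u) (hn : 4032 ≤ n) :
    (n.choose u : ℝ) * ((21/20) ^ (u + 1) * wgt u N j0) ≤
      900 * (j0 + 1) / n * (7/10) ^ u * wgt u N (j0 + (u + 1)) := by
  have hNn : n ≤ N := by omega
  have hn0 : (0:ℝ) < n := by exact_mod_cast (by omega : 0 < n)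
  -- the choose identity
  have e1 : (N.choose (j0 + (u + 1)) : ℝ) * ((j0 + (u + 1)).choose u : ℝ)
      = (N.choose u : ℝ) * ((N - u).choose (j0 + 1) : ℝ) := by
    have := Nat.choose_mul (n := N) (k := j0 + (u + 1)) (s := u) (by omega)
    rw [show j0 + (u + 1) - u = j0 + 1 by omega] at this
    exact_mod_cast this
  have e2 : (n.choose u : ℝ) ≤ N.choose u := by exact_mod_cast Nat.choose_le_choose u hNn
  have e3 : ((N - u).choose j0 : ℝ) * n ≤ 4 * (j0 + 1) * ((N - u).choose (j0 + 1) : ℝ) := by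
    have h := choose_rec (N - u) j0
    have : (n:ℝ) ≤ 4 * (((N - u : ℕ) : ℝ) - j0) := by
      have h1 : n + 4 * j0 ≤ 4 * (N - u) := by omega
      have h2 : (n + 4 * j0 : ℝ) ≤ 4 * ((N - u : ℕ) : ℝ) := by exact_mod_cast h1
      linarith
    calc ((N - u).choose j0 : ℝ) * n ≤ ((N - u).choose j0 : ℝ) * (4 * (((N - u : ℕ) : ℝ) - j0)) := by gcongr
      _ = 4 * (((N - u).choose j0 : ℝ) * (((N - u : ℕ) : ℝ) - j0)) := by ring
      _ = 4 * (((N - u).choose (j0 + 1) : ℝ) * (j0 + 1)) := by rw [h]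
      _ = _ := by ring
  have e4 := choose_shift N u j0 (by omega)
  have e5 : (2:ℝ) ^ u ≤ 2 ^ (j0 + 1) * ((2 * u).choose (j0 + (u + 1)) : ℝ) := by
    have h1 := two_pow_le_choose u (u - (j0 + 1)) (by omega)
    have h2 : (2 * u).choose (u - (j0 + 1)) = (2 * u).choose (j0 + (u + 1)) := by
      rw [← Nat.choose_symm (by omega)]; congr 1; omega
    rw [h2] at h1
    have h3 : 2 ^ u = 2 ^ (j0 + 1) * 2 ^ (u - (j0 + 1)) := by rw [← pow_add]; congr 1; omega
    have : 2 ^ u ≤ 2 ^ (j0 + 1) * (2 * u).choose (j0 + (u + 1)) := by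
      rw [h3]; exact Nat.mul_le_mul_left _ h1
    exact_mod_cast this
  have e6 : ((2 * u).choose j0 : ℝ) ≤ (101/100) ^ (2 * u) * 100 ^ j0 := choose_exp_bound _ _
  have e7 : ((j0 + (u + 1)).choose u : ℝ) ≤ (101/100) ^ (j0 + (u + 1)) * 100 ^ (j0 + 1) := by
    have := choose_exp_bound (j0 + (u + 1)) (j0 + 1)
    rwa [← Nat.choose_symm_of_eq_add (show j0 + (u + 1) = u + (j0 + 1) by ring)] at this
  have e8 : (80800:ℝ) ^ j0 ≤ (112/100) ^ u := by
    calc (80800:ℝ) ^ j0 ≤ ((112/100) ^ 100) ^ j0 := by gcongr; norm_num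
      _ = (112/100) ^ (100 * j0) := by rw [pow_mul]
      _ ≤ _ := pow_le_pow_right₀ (by norm_num) h100.le
  have keyid : ∀ a b : ℝ, b ^ (u + 1) * (a ^ (2 * u) * 100 ^ j0) * (a ^ (j0 + (u + 1)) * 100 ^ (j0 + 1))
      * 4 ^ j0 * 4 * 2 ^ (j0 + 1)
      = (b * a * 800) * (b * (a * a * a)) ^ u * (100 * a * 100 * 4 * 2) ^ j0 := by
    intro a b
    simp only [mul_pow, pow_add, pow_mul]
    ring
  have key : (21/20 : ℝ) ^ (u + 1) * ((101/100) ^ (2 * u) * 100 ^ j0) * ((101/100) ^ (j0 + (u + 1)) * 100 ^ (j0 + 1))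
      * 4 ^ j0 * 4 * 2 ^ (j0 + 1) ≤ 900 * ((7/10) ^ u * 2 ^ u) := by
    rw [keyid]
    have f1 : (100 * (101/100) * 100 * 4 * 2 : ℝ) ^ j0 ≤ (112/100) ^ u := by
      refine le_trans (le_of_eq ?_) e8
      norm_num
    calc _ ≤ (21/20 * (101/100) * 800 : ℝ) * (21/20 * (101/100 * (101/100) * (101/100))) ^ u * (112/100) ^ u :=
          mul_le_mul_of_nonneg_left f1 (by positivity)
      _ = (21/20 * (101/100) * 800 : ℝ) * ((21/20 * (101/100 * (101/100) * (101/100))) * (112/100)) ^ u := by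
          rw [mul_assoc, ← mul_pow]
      _ ≤ 900 * (7/10 * 2) ^ u := by
          apply mul_le_mul (by norm_num) _ (by positivity) (by norm_num)
          exact pow_le_pow_left₀ (by norm_num) (by norm_num) _
      _ = _ := by rw [mul_pow]
  unfold wgt
  have hD : (0:ℝ) < ((j0 + (u + 1)).choose u : ℝ) := by
    exact_mod_cast Nat.choose_pos (by omega)
  have hA0 : (0:ℝ) ≤ ((2 * u).choose j0 : ℝ) := by positivity
  have hB0 : (0:ℝ) ≤ (N.choose j0 : ℝ) := by positivity
  have hP0 : (0:ℝ) ≤ ((2 * u).choose (j0 + (u + 1)) : ℝ) := by positivity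
  have hQ0 : (0:ℝ) ≤ (N.choose (j0 + (u + 1)) : ℝ) := by positivity
  have hS0 : (0:ℝ) ≤ (N.choose u : ℝ) := by positivity
  have hT0 : (0:ℝ) ≤ ((N - u).choose j0 : ℝ) := by positivity
  have hT1 : (0:ℝ) ≤ ((N - u).choose (j0 + 1) : ℝ) := by positivity
  have hC0 : (0:ℝ) ≤ (n.choose u : ℝ) := by positivity
  generalize ((j0 + (u + 1)).choose u : ℝ) = D at *
  generalize ((2 * u).choose j0 : ℝ) = A at *
  generalize (N.choose j0 : ℝ) = B at *
  generalize ((2 * u).choose (j0 + (u + 1)) : ℝ) = P at *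
  generalize (N.choose (j0 + (u + 1)) : ℝ) = Q at *
  generalize (N.choose u : ℝ) = S at *
  generalize ((N - u).choose j0 : ℝ) = T0 at *
  generalize ((N - u).choose (j0 + 1) : ℝ) = T1 at *
  generalize (n.choose u : ℝ) = Cn at *
  have s1 : (Cn * ((21/20) ^ (u + 1) * (A * B))) * n ≤ (21/20) ^ (u + 1) * A * D * 4 ^ j0 * 4 * ((j0 + 1) * Q) := by
    rw [← mul_le_mul_iff_left₀ hD]
    calc (Cn * ((21/20) ^ (u + 1) * (A * B))) * n * D
        ≤ (S * ((21/20) ^ (u + 1) * (A * (4 ^ j0 * T0)))) * n * D := by gcongr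
      _ = (S * ((21/20) ^ (u + 1) * (A * 4 ^ j0))) * D * (T0 * n) := by ring
      _ ≤ (S * ((21/20) ^ (u + 1) * (A * 4 ^ j0))) * D * (4 * (j0 + 1) * T1) := by gcongr
      _ = ((21/20) ^ (u + 1) * (A * 4 ^ j0)) * D * (4 * (j0 + 1) * (S * T1)) := by ring
      _ = ((21/20) ^ (u + 1) * (A * 4 ^ j0)) * D * (4 * (j0 + 1) * (Q * D)) := by rw [e1]
      _ = _ := by ring
  have hp2 : (0:ℝ) < 2 ^ u := by positivity
  have s2 : (Cn * ((21/20) ^ (u + 1) * (A * B))) * n ≤ 900 * (j0 + 1) * (7/10) ^ u * (P * Q) := by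
    rw [← mul_le_mul_iff_left₀ hp2]
    calc (Cn * ((21/20) ^ (u + 1) * (A * B))) * n * 2 ^ u
        ≤ ((21/20) ^ (u + 1) * A * D * 4 ^ j0 * 4 * ((j0 + 1) * Q)) * (2 ^ (j0 + 1) * P) := by gcongr
      _ = ((21/20) ^ (u + 1) * A * D * 4 ^ j0 * 4 * 2 ^ (j0 + 1)) * ((j0 + 1) * Q * P) := by ring
      _ ≤ ((21/20 : ℝ) ^ (u + 1) * ((101/100) ^ (2 * u) * 100 ^ j0) * ((101/100) ^ (j0 + (u + 1)) * 100 ^ (j0 + 1))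
      * 4 ^ j0 * 4 * 2 ^ (j0 + 1)) * ((j0 + 1) * Q * P) := by gcongr
      _ ≤ (900 * ((7/10) ^ u * 2 ^ u)) * ((j0 + 1) * Q * P) := mul_le_mul_of_nonneg_right key (by positivity)
      _ = _ := by ring
  rw [← mul_le_mul_iff_left₀ hn0]
  refine s2.trans (le_of_eq ?_)
  field_simp

lemma wgt_pos (u N j : ℕ) (h1 : j ≤ 2 * u) (h2 : j ≤ N) : 0 < wgt u N j := by
  unfold wgt
  have := Nat.choose_pos h1
  have := Nat.choose_pos h2
  positivity

lemma b1_final (n u j0 : ℕ) (F : ℕ → ℝ) (R : ℝ) (hF0 : ∀ j, 0 ≤ F j) (hFR : ∀ j, F j ≤ R) (hu : 2 * u ≤ n)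
    (h100 : 100 * j0 < u) (hn : 4032 ≤ n)
    (hrec : ∀ j : ℕ, j ≤ u + j0 →
      F j * ((2 * u - j) * (2 * (n - u) - j) - 16 * j) ≤ F (j + 1) * ((j:ℝ) + 1) ^ 2) :
    (n.choose u : ℝ) * F j0 ≤ 900 * (j0 + 1) / n * (7/10) ^ u * R := by
  obtain ⟨N, hN⟩ : ∃ N, N = 2 * (n - u) := ⟨_, rfl⟩
  have hN' : (N:ℝ) = 2 * (n - u) := by
    rw [hN]; push_cast [Nat.cast_sub (show u ≤ n by omega)]; ring
  rw [← hN'] at hrec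
  have h1 := b1_chain n u j0 N hN F hF0 hu h100 hn hrec (u + 1) le_rfl
  have h2 := b1_num n u j0 N hN hu h100 hn
  have hw := wgt_pos u N (j0 + (u + 1)) (by omega) (by omega)
  have hw0 : 0 ≤ wgt u N j0 := by unfold wgt; positivity
  have hR : 0 ≤ R := (hF0 0).trans (hFR 0)
  rw [← mul_le_mul_iff_left₀ hw]
  calc (n.choose u : ℝ) * F j0 * wgt u N (j0 + (u + 1)) = (n.choose u : ℝ) * (F j0 * wgt u N (j0 + (u + 1))) := by ring
    _ ≤ (n.choose u : ℝ) * ((21/20) ^ (u + 1) * F (j0 + (u + 1)) * wgt u N j0) := by gcongr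
    _ ≤ (n.choose u : ℝ) * ((21/20) ^ (u + 1) * R * wgt u N j0) := by gcongr; exact hFR _
    _ = ((n.choose u : ℝ) * ((21/20) ^ (u + 1) * wgt u N j0)) * R := by ring
    _ ≤ _ := mul_le_mul_of_nonneg_right h2 hR
    _ = _ := by ring

lemma degree_aI {V : Type*} [Fintype V] (G : SimpleGraph V) (x : V) :
    (G.degree x : ℝ) = ∑ y, aI G x y := by
  rw [← SimpleGraph.card_neighborFinset_eq_degree]
  unfold aI
  rw [Finset.sum_boole]
  congr 2; ext; simp

lemma sum_degree_aI {V : Type*} [Fintype V] (G : SimpleGraph V) :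
    ∃ e : ℕ, ∑ x, ∑ y, aI G x y = 2 * e := by
  refine ⟨G.edgeFinset.card, ?_⟩
  simp_rw [← degree_aI]
  exact_mod_cast G.sum_degrees_eq_twice_card_edges

lemma inner_even {V : Type*} [Fintype V] (G : SimpleGraph V) (U : Finset V) :
    ∃ e : ℕ, ∑ x ∈ U, ∑ y ∈ U, aI G x y = 2 * e := by
  let H : SimpleGraph V := SimpleGraph.mk (fun x y => x ∈ U ∧ y ∈ U ∧ G.Adj x y)
    ⟨fun x y h => ⟨h.2.1, h.1, h.2.2.symm⟩⟩ ⟨fun x h => G.loopless.irrefl x h.2.2⟩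
  obtain ⟨e, he⟩ := sum_degree_aI H
  refine ⟨e, ?_⟩
  rw [← he, ← Finset.sum_subset (Finset.subset_univ U)]
  · refine Finset.sum_congr rfl fun x hx => ?_
    rw [← Finset.sum_subset (Finset.subset_univ U)]
    · refine Finset.sum_congr rfl fun y hy => ?_
      simp [aI, H, hx, hy]
    · intro y _ hy
      simp [aI, H, hy]
  · intro x _ hx
    simp [aI, H, hx]

lemma cross_even {V : Type*} [Fintype V] (G : SimpleGraph V) (d : ℕ)
    (hreg : ∀ x, (G.neighborSet x).ncard = 2 * d) (U : Finset V) :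
    ∃ e : ℕ, e ≤ d * U.card ∧ ∑ x ∈ U, ∑ y ∈ U, aI G x y = 2 * e ∧
      crossE G U = ((2 * (d * U.card - e) : ℕ) : ℝ) := by
  obtain ⟨e, he⟩ := inner_even G U
  have h1 := aI_inner_sum G (2 * d) hreg U Uᶜ rfl
  have h0 : 0 ≤ crossE G U := Finset.sum_nonneg fun _ _ => Finset.sum_nonneg fun _ _ => aI_nonneg _ _ _
  rw [← crossE, he] at h1
  push_cast at h1
  have hle : e ≤ d * U.card := by
    have : (e:ℝ) ≤ d * U.card := by linarith
    exact_mod_cast this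
  refine ⟨e, hle, he, ?_⟩
  push_cast [Nat.cast_sub hle]
  linarith

lemma switch2 {V : Type*} [Fintype V] (d : ℕ) (U : Finset V) (j : ℕ) :
    ((MF (2 * d) U (2 * j)).card : ℝ) *
      ((d * U.card - j) * (d * ((Fintype.card V : ℝ) - U.card) - j) - 4 * j * d ^ 2)
      ≤ ((MF (2 * d) U (2 * (j + 1))).card : ℝ) * ((j:ℝ) + 1) ^ 2 := by
  have h := switch (2 * d) U (2 * j)
  have hc : ((Uᶜ).card : ℝ) = (Fintype.card V : ℝ) - U.card := by
    rw [Finset.card_compl, Nat.cast_sub (Finset.card_le_univ U)]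
  rw [hc] at h
  push_cast at h
  rw [show 2 * (j + 1) = 2 * j + 2 by ring]
  nlinarith

lemma MF_le {V : Type*} [Fintype V] (r : ℕ) (U : Finset V) (b : ℕ) :
    ((MF r U b).card : ℝ) ≤ (regF V r).card := by
  exact_mod_cast Finset.card_filter_le _ _

lemma exp_app {V : Type*} [Fintype V] (d : ℕ) (hd : 2 ≤ d) (U : Finset V) (j0 : ℕ)
    (hu : 2 * U.card ≤ Fintype.card V) (h100 : 100 * j0 < U.card) (hn : 4032 ≤ Fintype.card V) :
    ((Fintype.card V).choose U.card : ℝ) * ((MF (2 * d) U (2 * j0)).card : ℝ)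
      ≤ 900 * (j0 + 1) / (Fintype.card V : ℝ) * (7/10) ^ U.card * (regF V (2 * d)).card := by
  refine b1_final _ _ _ (fun j => ((MF (2 * d) U (2 * j)).card : ℝ)) _ (fun j => by positivity)
    (fun j => MF_le _ _ _) hu h100 hn ?_
  intro j hj
  have h := switch2 d U j
  have hF : (0:ℝ) ≤ ((MF (2 * d) U (2 * j)).card : ℝ) := by positivity
  by_cases hX : 0 ≤ (2 * (U.card:ℝ) - j) * (2 * ((Fintype.card V : ℝ) - U.card) - j) - 16 * j
  · refine le_trans ?_ h
    refine mul_le_mul_of_nonneg_left ?_ hF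
    have hd2 : (2:ℝ) ≤ d := by exact_mod_cast hd
    have j0 : (0:ℝ) ≤ j := by positivity
    have hu' : 2 * (U.card : ℝ) ≤ Fintype.card V := by exact_mod_cast hu
    have a1 : (j:ℝ) ≤ 2 * U.card := by exact_mod_cast (by omega : j ≤ 2 * U.card)
    have b1 : (d:ℝ) / 2 * (2 * (U.card:ℝ) - j) ≤ d * U.card - j := by nlinarith
    have b2 : (d:ℝ) / 2 * (2 * ((Fintype.card V : ℝ) - U.card) - j) ≤ d * ((Fintype.card V : ℝ) - U.card) - j := by
      nlinarith
    have c1 : 0 ≤ (2 * (U.card:ℝ) - j) := by linarith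
    have c2 : 0 ≤ (2 * ((Fintype.card V : ℝ) - U.card) - j) := by linarith
    have b3 := mul_le_mul b1 b2 (by positivity) (le_trans (by positivity) b1)
    generalize (2 * (U.card:ℝ) - j) = p at *
    generalize (2 * ((Fintype.card V : ℝ) - U.card) - j) = q at *
    have b4 : (p * q - 16 * j) * 1 ≤ (p * q - 16 * j) * ((d:ℝ) / 2) ^ 2 :=
      mul_le_mul_of_nonneg_left (by nlinarith) hX
    nlinarith
  · push Not at hX
    refine (mul_nonpos_of_nonneg_of_nonpos hF hX.le).trans (by positivity)

lemma b2_chain (n u d : ℕ) (E : ℕ → ℝ) (R : ℝ) (hE0 : ∀ j, 0 ≤ E j) (hER : ∀ j, E j ≤ R) (hd : 2 ≤ d)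
    (hu : 1 ≤ u) (h1 : 6 * d ^ 3 * u ≤ n)
    (hrec : ∀ e : ℕ, e + 1 ≤ d * u →
      E (e + 1) * (((e:ℝ) + 1) * (d * (n - u) - (d * u - (e + 1))) - 4 * (d * u - (e + 1)) * d ^ 2)
        ≤ E e * (d * u - (e + 1) + 1) ^ 2) (e : ℕ) (he : e ≤ d * u) :
    E e * e.factorial ≤ ((d * u : ℝ) ^ 2 / n) ^ e * R := by
  induction e with
  | zero => simpa using hER 0
  | succ e ih =>
    have ih := ih (by omega)
    have h := hrec e he
    have hd' : (2:ℝ) ≤ d := by exact_mod_cast hd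
    have hu' : (1:ℝ) ≤ u := by exact_mod_cast hu
    have h1' : 6 * (d:ℝ) ^ 3 * u ≤ n := by exact_mod_cast h1
    have he' : (e:ℝ) + 1 ≤ d * u := by exact_mod_cast he
    have e0 : (0:ℝ) ≤ e := by positivity
    have hn : (0:ℝ) < n := lt_of_lt_of_le (by positivity) h1'
    have p1 : ((e:ℝ) + 1) * n ≤ ((e:ℝ) + 1) * (d * (n - u) - (d * u - (e + 1))) - 4 * (d * u - (e + 1)) * d ^ 2 := by
      have q1 : 4 * ((d:ℝ) * u - (e + 1)) * d ^ 2 ≤ (e + 1) * (4 * d ^ 3 * u) := by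
        have : 4 * ((d:ℝ) * u - (e + 1)) * d ^ 2 ≤ 4 * (d ^ 3 * u) := by
          have : 0 ≤ ((e:ℝ) + 1) * d ^ 2 := by positivity
          nlinarith
        have : 0 ≤ e * (4 * (d:ℝ) ^ 3 * u) := by positivity
        nlinarith
      have q2 : (n:ℝ) ≤ (d * (n - u) - (d * u - (e + 1))) - 4 * d ^ 3 * u := by
        have : 2 * (n:ℝ) ≤ d * n := by nlinarith
        have : (d:ℝ) * u ≤ d ^ 3 * u := by
          have : (d:ℝ) ≤ d ^ 3 := le_self_pow₀ (by linarith) (by norm_num)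
          nlinarith
        linarith
      have := mul_le_mul_of_nonneg_left q2 (by positivity : (0:ℝ) ≤ (e:ℝ) + 1)
      linarith
    have p2 : E (e + 1) * (((e:ℝ) + 1) * n) ≤ E e * (d * u) ^ 2 := by
      refine (mul_le_mul_of_nonneg_left p1 (hE0 _)).trans (h.trans ?_)
      refine mul_le_mul_of_nonneg_left ?_ (hE0 _)
      apply pow_le_pow_left₀ <;> linarith
    rw [Nat.factorial_succ]; push_cast
    rw [← mul_le_mul_iff_left₀ hn]
    calc E (e + 1) * (((e:ℝ) + 1) * e.factorial) * n = (E (e + 1) * (((e:ℝ) + 1) * n)) * e.factorial := by ring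
      _ ≤ (E e * (d * u) ^ 2) * e.factorial := mul_le_mul_of_nonneg_right p2 (by positivity)
      _ = (E e * e.factorial) * (d * u) ^ 2 := by ring
      _ ≤ (((d * u : ℝ) ^ 2 / n) ^ e * R) * (d * u) ^ 2 := mul_le_mul_of_nonneg_right ih (by positivity)
      _ = _ := by
          have hz : (d * u : ℝ) ^ 2 = ((d * u : ℝ) ^ 2 / n) * n := by field_simp
          generalize (d * u : ℝ) ^ 2 / n = z at hz ⊢
          rw [hz, pow_succ]; ring

lemma b2_final (n u d e : ℕ) (E R : ℝ) (hR : 0 ≤ R) (hE0 : 0 ≤ E) (hd : 2 ≤ d) (hu : 1 ≤ u) (hue : u + 1 ≤ e)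
    (h2 : (d * u) ^ 2 ≤ n) (h : E * e.factorial ≤ ((d * u : ℝ) ^ 2 / n) ^ e * R) :
    (n.choose u : ℝ) * E ≤ (d * u) ^ 2 * (9 * d ^ 2) ^ u / n * R := by
  have h2' : (d * u : ℝ) ^ 2 ≤ n := by exact_mod_cast h2
  have hd' : (2:ℝ) ≤ d := by exact_mod_cast hd
  have hu' : (1:ℝ) ≤ u := by exact_mod_cast hu
  have hn : (0:ℝ) < n := lt_of_lt_of_le (by positivity) h2'
  have f0 : (0:ℝ) < u.factorial := by positivity
  have s1 : E * u.factorial ≤ ((d * u : ℝ) ^ 2 / n) ^ (u + 1) * R := by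
    calc E * u.factorial ≤ E * e.factorial := by
          gcongr; exact (Nat.le_succ u).trans hue
      _ ≤ _ := h
      _ ≤ _ := by
          refine mul_le_mul_of_nonneg_right ?_ hR
          exact pow_le_pow_of_le_one (by positivity) (by rw [div_le_one hn]; exact h2') hue
  have s2 : (n.choose u : ℝ) * u.factorial ≤ (n:ℝ) ^ u := by
    have := Nat.choose_le_pow_div (α := ℝ) u n
    rwa [le_div_iff₀ f0] at this
  have s3 : (u:ℝ) ^ u ≤ 3 ^ u * u.factorial := by
    have h3 := Real.pow_div_factorial_le_exp (u:ℝ) (by positivity) u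
    rw [div_le_iff₀ f0] at h3
    refine h3.trans ?_
    gcongr
    rw [show (u:ℝ) = u * 1 by ring, Real.exp_nat_mul]
    gcongr
    linarith [Real.exp_one_lt_d9]
  have ff : (0:ℝ) < u.factorial * u.factorial := by positivity
  rw [← mul_le_mul_iff_left₀ ff]
  calc (n.choose u : ℝ) * E * (u.factorial * u.factorial)
      = ((n.choose u : ℝ) * u.factorial) * (E * u.factorial) := by ring
    _ ≤ (n:ℝ) ^ u * (((d * u : ℝ) ^ 2 / n) ^ (u + 1) * R) := by gcongr
    _ = (d * u) ^ 2 * (d ^ 2) ^ u / n * R * ((u:ℝ) ^ u * u ^ u) := by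
        rw [pow_succ, div_pow, mul_pow (d:ℝ) u 2, mul_pow]
        field_simp
        ring
    _ ≤ (d * u) ^ 2 * (d ^ 2) ^ u / n * R * ((3 ^ u * u.factorial) * (3 ^ u * u.factorial)) := by gcongr
    _ = _ := by
        have h9 : (9:ℝ) ^ u = 3 ^ u * 3 ^ u := by rw [← mul_pow]; norm_num
        rw [mul_pow (9:ℝ), h9]; ring

lemma sparse_app {V : Type*} [Fintype V] (d : ℕ) (hd : 2 ≤ d) (U : Finset V) (e : ℕ)
    (hu : 1 ≤ U.card) (h1 : 6 * d ^ 3 * U.card ≤ Fintype.card V) (h2 : (d * U.card) ^ 2 ≤ Fintype.card V)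
    (he1 : U.card + 1 ≤ e) (he2 : e ≤ d * U.card) :
    ((Fintype.card V).choose U.card : ℝ) * ((MF (2 * d) U (2 * (d * U.card - e))).card : ℝ)
      ≤ (d * U.card) ^ 2 * (9 * d ^ 2) ^ U.card / (Fintype.card V : ℝ) * (regF V (2 * d)).card := by
  refine b2_final _ _ d e _ _ (by positivity) (by positivity) hd hu he1 h2 ?_
  refine b2_chain _ _ d (fun e => ((MF (2 * d) U (2 * (d * U.card - e))).card : ℝ)) _
    (fun j => by positivity) (fun j => MF_le _ _ _) hd hu h1 ?_ e he2
  intro e he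
  have h := switch2 d U (d * U.card - (e + 1))
  rw [show d * U.card - (e + 1) + 1 = d * U.card - e by omega] at h
  push_cast [Nat.cast_sub he] at h
  refine le_trans (le_of_eq ?_) h
  ring

lemma union_bound {V : Type*} [Fintype V] (r : ℕ) (Bad : Finset (SimpleGraph V)) (I : Finset ℕ)
    (J : ℕ → Finset ℕ) (β : ℕ → ℕ → ℕ) (c : ℕ → ℝ) (R : ℝ) (hR : 0 ≤ R) (hc0 : ∀ u, 0 ≤ c u)
    (hBad : ∀ G ∈ Bad, ∃ U : Finset V, U.card ∈ I ∧ ∃ j ∈ J U.card, G ∈ MF r U (β U.card j))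
    (hc : ∀ U : Finset V, U.card ∈ I → ∀ j ∈ J U.card,
      ((Fintype.card V).choose U.card : ℝ) * ((MF r U (β U.card j)).card : ℝ) ≤ c U.card * R) :
    (Bad.card : ℝ) ≤ ∑ u ∈ I, (J u).card * c u * R := by
  have hsub : Bad ⊆ I.biUnion fun u => (Finset.powersetCard u (Finset.univ : Finset V)).biUnion fun U =>
      (J u).biUnion fun j => MF r U (β u j) := by
    intro G hG
    obtain ⟨U, hU, j, hj, hm⟩ := hBad G hG
    simp only [Finset.mem_biUnion, Finset.mem_powersetCard]
    exact ⟨U.card, hU, U, ⟨Finset.subset_univ _, rfl⟩, j, hj, hm⟩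
  have h1 : Bad.card ≤ ∑ u ∈ I, ∑ U ∈ Finset.powersetCard u (Finset.univ : Finset V),
      ∑ j ∈ J u, (MF r U (β u j)).card := by
    refine (Finset.card_le_card hsub).trans (Finset.card_biUnion_le.trans ?_)
    refine Finset.sum_le_sum fun u _ => Finset.card_biUnion_le.trans ?_
    exact Finset.sum_le_sum fun U _ => Finset.card_biUnion_le
  have h2 : (Bad.card : ℝ) ≤ ∑ u ∈ I, ∑ U ∈ Finset.powersetCard u (Finset.univ : Finset V),
      ∑ j ∈ J u, ((MF r U (β u j)).card : ℝ) := by exact_mod_cast h1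
  refine h2.trans (Finset.sum_le_sum fun u hu => ?_)
  have h3 : ∀ U ∈ Finset.powersetCard u (Finset.univ : Finset V),
      ∑ j ∈ J u, ((MF r U (β u j)).card : ℝ) ≤ (J u).card * c u * R / ((Fintype.card V).choose u : ℝ) := by
    intro U hU
    have hUc : U.card = u := (Finset.mem_powersetCard.1 hU).2
    subst hUc
    have hpos : (0:ℝ) < ((Fintype.card V).choose U.card : ℝ) := by
      exact_mod_cast Nat.choose_pos (Finset.card_le_univ U)
    rw [le_div_iff₀ hpos, Finset.sum_mul, mul_assoc, ← nsmul_eq_mul, ← Finset.sum_const]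
    refine Finset.sum_le_sum fun j hj => ?_
    rw [mul_comm]
    exact hc U hu j hj
  refine (Finset.sum_le_sum h3).trans ?_
  rw [Finset.sum_const, Finset.card_powersetCard, Finset.card_univ, nsmul_eq_mul]
  have hx : 0 ≤ (J u).card * c u * R := by have := hc0 u; positivity
  by_cases h0 : ((Fintype.card V).choose u : ℝ) = 0
  · rw [h0]; simpa using hx
  · rw [mul_div_cancel₀ _ h0]

lemma bad1 {V : Type*} [Fintype V] (d : ℕ) (hd : 2 ≤ d) (hn : 4032 ≤ Fintype.card V) :
    (((regF V (2 * d)).filter (fun G => ¬ Expands G (1/50))).card : ℝ)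
      ≤ 900 * (∑' u : ℕ, (u:ℝ) ^ 2 * (7/10) ^ u) / (Fintype.card V : ℝ) * (regF V (2 * d)).card := by
  obtain ⟨n, hnn⟩ : ∃ n, n = Fintype.card V := ⟨_, rfl⟩
  have h := union_bound (2 * d) ((regF V (2 * d)).filter (fun G => ¬ Expands G (1/50)))
    (Finset.Icc 1 (n / 2)) (fun u => (Finset.range u).filter (fun j => 100 * j < u)) (fun _ j => 2 * j)
    (fun u => 900 * u / n * (7/10) ^ u) ((regF V (2 * d)).card) (by positivity) (fun u => by positivity) ?_ ?_
  · refine h.trans ?_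
    rw [← hnn, ← Finset.sum_mul]
    refine mul_le_mul_of_nonneg_right ?_ (by positivity)
    have hs : Summable (fun u : ℕ => (u:ℝ) ^ 2 * (7/10) ^ u) :=
      summable_pow_mul_geometric_of_norm_lt_one 2 (by norm_num)
    calc _ ≤ ∑ u ∈ Finset.Icc 1 (n / 2), 900 / (n:ℝ) * ((u:ℝ) ^ 2 * (7/10) ^ u) := by
          refine Finset.sum_le_sum fun u _ => ?_
          have : (((Finset.range u).filter (fun j => 100 * j < u)).card : ℝ) ≤ u := by
            have := Finset.card_filter_le (Finset.range u) (fun j => 100 * j < u)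
            rw [Finset.card_range] at this
            exact_mod_cast this
          calc _ ≤ (u:ℝ) * (900 * u / n * (7/10) ^ u) := mul_le_mul_of_nonneg_right this (by positivity)
            _ = _ := by ring
      _ = 900 / (n:ℝ) * ∑ u ∈ Finset.Icc 1 (n / 2), ((u:ℝ) ^ 2 * (7/10) ^ u) := by rw [Finset.mul_sum]
      _ ≤ 900 / (n:ℝ) * ∑' u : ℕ, ((u:ℝ) ^ 2 * (7/10) ^ u) := by
          refine mul_le_mul_of_nonneg_left ?_ (by positivity)
          exact hs.sum_le_tsum _ (fun i _ => by positivity)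
      _ = _ := by ring
  · intro G hG
    rw [Finset.mem_filter, mem_regF] at hG
    obtain ⟨hreg, hE⟩ := hG
    unfold Expands at hE
    push Not at hE
    obtain ⟨U, hU1, hU2⟩ := hE
    obtain ⟨e, he1, he2, he3⟩ := cross_even G d hreg U
    rw [← crossE, he3] at hU2
    push_cast at hU2
    have hlt : 100 * (d * U.card - e) < U.card := by
      have : (100 * ((d * U.card - e : ℕ) : ℝ)) < U.card := by linarith
      exact_mod_cast this
    refine ⟨U, ?_, d * U.card - e, ?_, ?_⟩
    · rw [Finset.mem_Icc]; omega
    · rw [Finset.mem_filter, Finset.mem_range]; omega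
    · rw [MF, Finset.mem_filter, mem_regF]
      exact ⟨hreg, he3⟩
  · intro U hU j hj
    rw [Finset.mem_Icc] at hU
    rw [Finset.mem_filter, Finset.mem_range] at hj
    have := exp_app d hd U j (by omega) hj.2 hn
    refine this.trans ?_
    rw [← hnn]
    refine mul_le_mul_of_nonneg_right ?_ (by positivity)
    have : (j:ℝ) + 1 ≤ U.card := by exact_mod_cast hj.1
    gcongr

lemma bad2 {V : Type*} [Fintype V] (d l : ℕ) (hd : 2 ≤ d) 
    (h1 : 6 * d ^ 3 * l ≤ Fintype.card V) (h2 : (d * l) ^ 2 ≤ Fintype.card V) :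
    (((regF V (2 * d)).filter (fun G => ¬ SparseG G l)).card : ℝ)
      ≤ d ^ 3 * (144 * d ^ 2) ^ l / (Fintype.card V : ℝ) * (regF V (2 * d)).card := by
  obtain ⟨n, hnn⟩ : ∃ n, n = Fintype.card V := ⟨_, rfl⟩
  have hd' : (2:ℝ) ≤ d := by exact_mod_cast hd
  have h := union_bound (2 * d) ((regF V (2 * d)).filter (fun G => ¬ SparseG G l))
    (Finset.Icc 1 l) (fun u => Finset.Icc (u + 1) (d * u)) (fun u e => 2 * (d * u - e))
    (fun u => (d * u) ^ 2 * (9 * d ^ 2) ^ u / n) ((regF V (2 * d)).card) (by positivity) (fun u => by positivity) ?_ ?_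
  · refine h.trans ?_
    rw [← hnn, ← Finset.sum_mul]
    refine mul_le_mul_of_nonneg_right ?_ (by positivity)
    calc _ ≤ ∑ u ∈ Finset.Icc 1 l, (d:ℝ) ^ 3 * (72 * d ^ 2) ^ l / n := by
          refine Finset.sum_le_sum fun u hu => ?_
          rw [Finset.mem_Icc] at hu
          have a1 : ((Finset.Icc (u + 1) (d * u)).card : ℝ) ≤ d * u := by
            rw [Nat.card_Icc]
            exact_mod_cast (by omega : d * u + 1 - (u + 1) ≤ d * u)
          have a2 : (u:ℝ) ≤ 2 ^ u := by exact_mod_cast (Nat.lt_two_pow_self).le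
          calc _ ≤ ((d:ℝ) * u) * ((d * u) ^ 2 * (9 * d ^ 2) ^ u / n) := mul_le_mul_of_nonneg_right a1 (by positivity)
            _ = (d:ℝ) ^ 3 * (u ^ 3 * (9 * d ^ 2) ^ u) / n := by ring
            _ ≤ (d:ℝ) ^ 3 * ((2 ^ u) ^ 3 * (9 * d ^ 2) ^ u) / n := by gcongr
            _ = (d:ℝ) ^ 3 * (72 * d ^ 2) ^ u / n := by
                have : ((2:ℝ) ^ u) ^ 3 = 8 ^ u := by rw [← pow_mul, mul_comm, pow_mul]; norm_num
                rw [this, ← mul_pow]; ring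
            _ ≤ _ := by
                gcongr
                · nlinarith
                · exact hu.2
      _ = (l:ℝ) * ((d:ℝ) ^ 3 * (72 * d ^ 2) ^ l / n) := by
          rw [Finset.sum_const, Nat.card_Icc, nsmul_eq_mul]; simp
      _ ≤ (2:ℝ) ^ l * ((d:ℝ) ^ 3 * (72 * d ^ 2) ^ l / n) := by
          have : (l:ℝ) ≤ 2 ^ l := by exact_mod_cast (Nat.lt_two_pow_self).le
          gcongr
      _ = _ := by
          rw [show (144 * (d:ℝ) ^ 2) = 2 * (72 * d ^ 2) by ring, mul_pow 2]; ring
  · intro G hG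
    rw [Finset.mem_filter, mem_regF] at hG
    obtain ⟨hreg, hE⟩ := hG
    unfold SparseG at hE
    push Not at hE
    obtain ⟨U, hU1, hU2, hU3⟩ := hE
    obtain ⟨e, he1, he2, he3⟩ := cross_even G d hreg U
    rw [he2] at hU3
    have hlt : U.card < e := by
      have : (U.card : ℝ) < e := by linarith
      exact_mod_cast this
    refine ⟨U, ?_, e, ?_, ?_⟩
    · rw [Finset.mem_Icc]; omega
    · rw [Finset.mem_Icc]; omega
    · rw [MF, Finset.mem_filter, mem_regF]
      exact ⟨hreg, he3⟩
  · intro U hU j hj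
    rw [Finset.mem_Icc] at hU hj
    rw [hnn]
    exact sparse_app d hd U j hU.1 (le_trans (Nat.mul_le_mul_left _ hU.2) h1)
      (le_trans (Nat.pow_le_pow_left (Nat.mul_le_mul_left _ hU.2) 2) h2) hj.1 hj.2

lemma reg_exists (d n : ℕ) (hn : 2 * d < n) : (regF (Fin n) (2 * d)).Nonempty := by
  have : NeZero n := ⟨by omega⟩
  set D : Finset ℕ := Finset.Icc 1 d ∪ Finset.Ico (n - d) n with hD
  have hDc : D.card = 2 * d := by
    rw [hD, Finset.card_union_of_disjoint]
    · simp; omega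
    · rw [Finset.disjoint_left]; intro a; simp; omega
  have hDm : ∀ a, a ∈ D ↔ (1 ≤ a ∧ a ≤ d) ∨ (n - d ≤ a ∧ a < n) := by
    intro a; simp [hD]
  have hneg : ∀ x y : Fin n, (y - x).val ∈ D → (x - y).val ∈ D := by
    intro x y h
    rw [hDm] at h ⊢
    rw [Fin.sub_def] at h ⊢
    simp only at h ⊢
    have hx := x.isLt
    have hy := y.isLt
    rcases lt_trichotomy x.val y.val with c | c | c
    · rw [show n - x.val + y.val = (y.val - x.val) + n by omega, Nat.add_mod_right, Nat.mod_eq_of_lt (by omega)] at h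
      rw [Nat.mod_eq_of_lt (by omega)]
      omega
    · rw [c, Nat.sub_add_cancel (by omega), Nat.mod_self] at h; omega
    · rw [Nat.mod_eq_of_lt (by omega)] at h
      rw [show n - y.val + x.val = (x.val - y.val) + n by omega, Nat.add_mod_right, Nat.mod_eq_of_lt (by omega)]
      omega
  let G : SimpleGraph (Fin n) := SimpleGraph.mk (fun x y => (y - x).val ∈ D)
    ⟨fun x y h => hneg x y h⟩ ⟨fun x h => by
      rw [sub_self, hDm] at h; simp at h; omega⟩
  refine ⟨G, ?_⟩
  rw [mem_regF]
  intro x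
  have : G.neighborSet x = (fun y : Fin n => (y - x).val) ⁻¹' (D : Set ℕ) := by
    ext y; simp [G]
  rw [this]
  have hinj : Function.Injective (fun y : Fin n => (y - x).val) := by
    intro a b h
    exact sub_left_injective (Fin.val_injective h)
  rw [Set.ncard_preimage_of_injective_subset_range hinj, Set.ncard_coe_finset, hDc]
  intro a ha
  rw [Finset.mem_coe, hDm] at ha
  refine ⟨⟨a, by omega⟩ + x, by simp⟩

lemma good_ratio (d : ℕ) (hd : 2 ≤ d) (C : ℝ)
    (hC : ∀ n l : ℕ, 1 ≤ l → l ≤ n → n ≤ ((144 * d ^ 2) ^ 2) ^ (l + 1) →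
      ∀ (V : Type) [Fintype V] (G : SimpleGraph V), Fintype.card V = n →
        (∀ x, (G.neighborSet x).ncard = 2 * d) → SparseG G l → Expands G (1/50) →
        ∀ A : List V → V, ValidRule G A → ∀ u : V, ecoverTime G A u ≤ ENNReal.ofReal (C * (n : ℝ)))
    (n : ℕ) (hn : 4032 ≤ n) (hnB : (144 * d ^ 2) ^ 2 ≤ n) :
    1 - (900 * (∑' u : ℕ, (u:ℝ) ^ 2 * (7/10) ^ u) / (n : ℝ) + d ^ 3 / Real.sqrt n) ≤
      (Set.ncard {G : SimpleGraph (Fin n) |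
              (∀ x, (G.neighborSet x).ncard = 2 * d) ∧
              ∀ A : List (Fin n) → Fin n, ValidRule G A → ∀ u : Fin n,
                ecoverTime G A u ≤ ENNReal.ofReal (C * (n : ℝ))} : ℝ) /
            (Set.ncard {G : SimpleGraph (Fin n) | ∀ x, (G.neighborSet x).ncard = 2 * d} : ℝ) := by
  obtain ⟨K, hK⟩ : ∃ K, K = 144 * d ^ 2 := ⟨_, rfl⟩
  rw [← hK] at hC hnB
  have hdd : 4 ≤ d ^ 2 := by nlinarith
  have hKd : 2 * d ≤ K := by nlinarith
  have hKd3 : 12 * d ^ 3 ≤ K ^ 2 := by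
    rw [hK]
    have : d ^ 3 ≤ d ^ 4 := Nat.pow_le_pow_right (by omega) (by omega)
    have e : (144 * d ^ 2) ^ 2 = 20736 * d ^ 4 := by ring
    omega
  have hK2 : 576 ≤ K := by omega
  obtain ⟨l, hl⟩ : ∃ l, l = Nat.log (K ^ 2) n := ⟨_, rfl⟩
  have hB1 : 1 < K ^ 2 := by nlinarith
  have hl1 : 1 ≤ l := by rw [hl]; exact Nat.log_pos hB1 hnB
  have hpl : (K ^ 2) ^ l ≤ n := by rw [hl]; exact Nat.pow_log_le_self _ (by omega)
  have hpl2 : n ≤ (K ^ 2) ^ (l + 1) := by rw [hl]; exact (Nat.lt_pow_succ_log_self hB1 n).le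
  have hln : l ≤ n := by rw [hl]; exact Nat.log_le_self _ _
  have hl2 : l ≤ 2 ^ l := (Nat.lt_two_pow_self).le
  have h1 : 6 * d ^ 3 * l ≤ n := by
    calc 6 * d ^ 3 * l ≤ (6 * d ^ 3) ^ l * 2 ^ l :=
          Nat.mul_le_mul (Nat.le_self_pow (by omega) _) hl2
      _ = (12 * d ^ 3) ^ l := by rw [← mul_pow]; congr 1; ring
      _ ≤ (K ^ 2) ^ l := Nat.pow_le_pow_left hKd3 l
      _ ≤ n := hpl
  have h2 : (d * l) ^ 2 ≤ n := by
    calc (d * l) ^ 2 ≤ (d ^ l * 2 ^ l) ^ 2 :=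
          Nat.pow_le_pow_left (Nat.mul_le_mul (Nat.le_self_pow (by omega) _) hl2) 2
      _ = ((2 * d) ^ l) ^ 2 := by rw [← mul_pow, mul_comm d 2]
      _ ≤ (K ^ l) ^ 2 := Nat.pow_le_pow_left (Nat.pow_le_pow_left hKd l) 2
      _ = (K ^ 2) ^ l := by rw [← pow_mul, ← pow_mul, mul_comm]
      _ ≤ n := hpl
  have b1 := bad1 (V := Fin n) d hd (by simpa using hn)
  have b2 := bad2 (V := Fin n) d l hd (by simpa using h1) (by simpa using h2)
  rw [Fintype.card_fin] at b1 b2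
  set R := regF (Fin n) (2 * d) with hR
  have hne : (0:ℝ) < R.card := by
    exact_mod_cast (reg_exists d n (by nlinarith)).card_pos
  have hn0 : (0:ℝ) < n := by exact_mod_cast (by omega : 0 < n)
  have hRn : Set.ncard {G : SimpleGraph (Fin n) | ∀ x, (G.neighborSet x).ncard = 2 * d} = R.card := by
    rw [← Set.ncard_coe_finset]; congr 1; ext G; simp [hR, mem_regF]
  rw [hRn]
  set X := R.filter (fun G => ¬ Expands G (1/50)) with hX
  set Y := R.filter (fun G => ¬ SparseG G l) with hY
  have hsub : ((R \ (X ∪ Y) : Finset (SimpleGraph (Fin n))) : Set (SimpleGraph (Fin n))) ⊆ {G : SimpleGraph (Fin n) |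
              (∀ x, (G.neighborSet x).ncard = 2 * d) ∧
              ∀ A : List (Fin n) → Fin n, ValidRule G A → ∀ u : Fin n,
                ecoverTime G A u ≤ ENNReal.ofReal (C * (n : ℝ))} := by
    intro G hG
    simp only [Finset.coe_sdiff, Set.mem_sdiff, Finset.mem_coe, Finset.mem_union, hX, hY, Finset.mem_filter,
      not_or, not_and, not_not] at hG
    obtain ⟨g1, g2, g3⟩ := hG
    have hreg := (mem_regF _ _ _).1 g1
    exact ⟨hreg, hC n l hl1 hln hpl2 (Fin n) G (by simp) hreg (g3 g1) (g2 g1)⟩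
  have hcard := Set.ncard_le_ncard hsub (Set.toFinite _)
  rw [Set.ncard_coe_finset] at hcard
  have hc2 : R.card ≤ (R \ (X ∪ Y)).card + (X.card + Y.card) := by
    have := Finset.card_le_card_sdiff_add_card (s := R) (t := X ∪ Y)
    have := Finset.card_union_le X Y
    omega
  have hc3 : (R.card : ℝ) ≤ (R \ (X ∪ Y)).card + (X.card + Y.card) := by exact_mod_cast hc2
  have hcard' := (Nat.cast_le (α := ℝ)).2 hcard
  rw [le_div_iff₀ hne]
  refine le_trans ?_ hcard'
  have hsq : ((144 * (d:ℝ) ^ 2) ^ l) ≤ Real.sqrt n := by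
    apply Real.le_sqrt_of_sq_le
    have : (K ^ l) ^ 2 ≤ n := by
      rw [← pow_mul, mul_comm, pow_mul]; exact hpl
    rw [hK] at this
    exact_mod_cast this
  have hs0 : 0 < Real.sqrt n := Real.sqrt_pos.2 hn0
  have b3 : (d:ℝ) ^ 3 * (144 * d ^ 2) ^ l / n ≤ d ^ 3 / Real.sqrt n := by
    rw [div_le_div_iff₀ hn0 hs0, mul_assoc]
    refine mul_le_mul_of_nonneg_left ?_ (by positivity)
    calc (144 * (d:ℝ) ^ 2) ^ l * Real.sqrt n ≤ Real.sqrt n * Real.sqrt n := by gcongr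
      _ = n := Real.mul_self_sqrt hn0.le
  have b4 := mul_le_mul_of_nonneg_right b3 hne.le
  nlinarith

/-- Fix an even `r ≥ 4`. There is a constant `C` such that, for a graph `G`
drawn uniformly at random from all simple `r`-regular graphs on `{1,…,n}`, with probability
tending to `1` as `n → ∞`, for every rule `A` and every start vertex the E-process on `G`
has vertex cover time at most `C·n`. -/
theorem stmt1 (r : ℕ) (hr4 : 4 ≤ r) (hreven : Even r) :
    ∃ C : ℝ, 0 < C ∧
      Filter.Tendsto (fun n : ℕ =>
          (Set.ncard {G : SimpleGraph (Fin n) |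
              (∀ x, (G.neighborSet x).ncard = r) ∧
              ∀ A : List (Fin n) → Fin n, ValidRule G A → ∀ u : Fin n,
                ecoverTime G A u ≤ ENNReal.ofReal (C * (n : ℝ))} : ℝ) /
            (Set.ncard {G : SimpleGraph (Fin n) | ∀ x, (G.neighborSet x).ncard = r} : ℝ))
        Filter.atTop (nhds 1) := by
  obtain ⟨d, hd⟩ := hreven
  rw [← two_mul] at hd
  subst hd
  have hd2 : 2 ≤ d := by omega
  obtain ⟨C, hC0, hC⟩ := det_cover (2 * d) ((144 * d ^ 2) ^ 2) hr4 (even_two_mul d)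
    (Nat.one_le_pow _ _ (by positivity)) (1/50) (by norm_num) (by norm_num)
  refine ⟨C, hC0, ?_⟩
  have hlim : Filter.Tendsto (fun n : ℕ => 1 - (900 * (∑' u : ℕ, (u:ℝ) ^ 2 * (7/10) ^ u) / (n : ℝ)
      + (d:ℝ) ^ 3 / Real.sqrt n)) Filter.atTop (nhds 1) := by
    have t1 := tendsto_const_div_atTop_nhds_zero_nat (900 * (∑' u : ℕ, (u:ℝ) ^ 2 * (7/10) ^ u))
    have t2 : Filter.Tendsto (fun n : ℕ => (d:ℝ) ^ 3 / Real.sqrt n) Filter.atTop (nhds 0) :=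
      Filter.Tendsto.div_atTop tendsto_const_nhds
        (Real.tendsto_sqrt_atTop.comp tendsto_natCast_atTop_atTop)
    have := (t1.add t2).const_sub 1
    simpa using this
  refine tendsto_of_tendsto_of_tendsto_of_le_of_le' hlim tendsto_const_nhds ?_ ?_
  · filter_upwards [Filter.eventually_ge_atTop 4032, Filter.eventually_ge_atTop ((144 * d ^ 2) ^ 2)] with n h1 h2
    exact good_ratio d hd2 C hC n h1 h2
  · refine Filter.Eventually.of_forall fun n => ?_
    refine div_le_one_of_le₀ ?_ (by positivity)
    refine Nat.cast_le.2 (Set.ncard_le_ncard ?_ (Set.toFinite _))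
    intro G hG
    exact hG.1
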